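/- Let u ∈ C⁴(B_R(0)), B_R(0) ⊂ ℝ², be a convex solution of det ∇²u / (1 + |∇u|²)² = f(x) in B_R(0), where f ∈ C²(B_R(0)) satisfies 0 < m ≤ f ≤ M. Then |∇²u(0)| ≤ C, where C depends only on m, M, R, sup|∇f|, sup|∇²f|, and sup|∇u|. -/

import Mathlib

open Metric
open scoped BigOperators

/-- The partial derivative in the i-th coordinate direction. -/
noncomputable def pd (i : Fin 2) (f : EuclideanSpace ℝ (Fin 2) → ℝ)
    (x : EuclideanSpace ℝ (Fin 2)) : ℝ :=
  fderiv ℝ f x (EuclideanSpace.single i 1)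

/-!
At an interior maximum of Pogorelov's function `(ε - w) u_ee exp (|∇u|² / 2)`, over points and unit
directions `e`, the Hessian is diagonal in a frame containing `e`. Contracting the second-order
conditions with the cofactors of the Hessian and inserting the twice differentiated equation cancels
the third derivatives, and what is left bounds `(ε - w) u_ee`. The cutoff `ε - w`, where `w` is the
height of `u` above its tangent plane at the origin, satisfies `∇²(ε - w) = -∇²u`, so its
second derivatives contribute only a multiple of `det ∇²u`.

The maximum is interior as soon as `w > ε` on the circle of radius `R / 2`, with `ε` depending only
on `m`, `R` and `sup |∇u|`. This quantitative strict convexity is special to dimension two: if `w`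
were tiny along a segment, it could be compared on a rectangle with a barrier whose slope in the
transverse direction grows logarithmically, contradicting `det ∇²w ≥ m`.
-/

open Filter Set Topology

/-! ### Two-jets and directional derivatives -/

/-- `HasTwoJetAt φ a b t`: near `t` the function `φ` is differentiable, its first derivative at `t`
is `a` and its second derivative at `t` is `b`. Second-order information along lines is computed
with this predicate. -/
def HasTwoJetAt (φ : ℝ → ℝ) (a b t : ℝ) : Prop :=
  ∃ φ' : ℝ → ℝ, (∀ᶠ s in 𝓝 t, HasDerivAt φ (φ' s) s) ∧ φ' t = a ∧ HasDerivAt φ' b t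

namespace HasTwoJetAt

variable {φ ψ : ℝ → ℝ} {a b c d t : ℝ}

theorem hasDerivAt (h : HasTwoJetAt φ a b t) : HasDerivAt φ a t := by
  obtain ⟨φ', hφ, rfl, -⟩ := h
  exact hφ.self_of_nhds

theorem unique (h₁ : HasTwoJetAt φ a b t) (h₂ : HasTwoJetAt ψ c d t) (h : φ =ᶠ[𝓝 t] ψ) :
    a = c ∧ b = d := by
  obtain ⟨φ', hφ, rfl, hφ'⟩ := h₁
  obtain ⟨ψ', hψ, rfl, hψ'⟩ := h₂
  have heq : φ' =ᶠ[𝓝 t] ψ' := by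
    filter_upwards [hφ, hψ, h.eventuallyEq_nhds] with s hs hs' hφψ
    exact hs.unique (hs'.congr_of_eventuallyEq hφψ)
  exact ⟨heq.eq_of_nhds, hφ'.unique (hψ'.congr_of_eventuallyEq heq)⟩

theorem const (c t : ℝ) : HasTwoJetAt (fun _ => c) 0 0 t :=
  ⟨fun _ => 0, .of_forall fun s => hasDerivAt_const s c, rfl, hasDerivAt_const t 0⟩

theorem affine (c d t : ℝ) : HasTwoJetAt (fun s => c + s * d) d 0 t :=
  ⟨fun _ => d, .of_forall fun _ => (hasDerivAt_mul_const d).const_add c, rfl, hasDerivAt_const t d⟩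

theorem add (hφ : HasTwoJetAt φ a b t) (hψ : HasTwoJetAt ψ c d t) :
    HasTwoJetAt (fun s => φ s + ψ s) (a + c) (b + d) t := by
  obtain ⟨φ', hφ, rfl, hφ'⟩ := hφ
  obtain ⟨ψ', hψ, rfl, hψ'⟩ := hψ
  exact ⟨fun s => φ' s + ψ' s, by filter_upwards [hφ, hψ] with s h₁ h₂ using h₁.add h₂, rfl,
    hφ'.add hψ'⟩

theorem neg (hφ : HasTwoJetAt φ a b t) : HasTwoJetAt (fun s => -φ s) (-a) (-b) t := by
  obtain ⟨φ', hφ, rfl, hφ'⟩ := hφ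
  exact ⟨fun s => -φ' s, hφ.mono fun s hs => hs.neg, rfl, hφ'.neg⟩

theorem sub (hφ : HasTwoJetAt φ a b t) (hψ : HasTwoJetAt ψ c d t) :
    HasTwoJetAt (fun s => φ s - ψ s) (a - c) (b - d) t := by
  simpa only [sub_eq_add_neg] using hφ.add hψ.neg

theorem mul (hφ : HasTwoJetAt φ a b t) (hψ : HasTwoJetAt ψ c d t) :
    HasTwoJetAt (fun s => φ s * ψ s) (a * ψ t + φ t * c) (b * ψ t + 2 * a * c + φ t * d) t := by
  have hφt := hφ.hasDerivAt
  have hψt := hψ.hasDerivAt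
  obtain ⟨φ', hφ, rfl, hφ'⟩ := hφ
  obtain ⟨ψ', hψ, rfl, hψ'⟩ := hψ
  refine ⟨fun s => φ' s * ψ s + φ s * ψ' s, ?_, rfl, ?_⟩
  · filter_upwards [hφ, hψ] with s h₁ h₂ using h₁.mul h₂
  · exact ((hφ'.mul hψt).add (hφt.mul hψ')).congr_deriv (by ring)

theorem sq (hφ : HasTwoJetAt φ a b t) :
    HasTwoJetAt (fun s => φ s ^ 2) (2 * φ t * a) (2 * (a ^ 2 + φ t * b)) t := by
  convert hφ.mul hφ using 1 <;> first | (ext s; ring) | ring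

theorem log (hφ : HasTwoJetAt φ a b t) (ht : φ t ≠ 0) :
    HasTwoJetAt (fun s => Real.log (φ s)) (a / φ t) (b / φ t - (a / φ t) ^ 2) t := by
  have hφt := hφ.hasDerivAt
  obtain ⟨φ', hφ, rfl, hφ'⟩ := hφ
  refine ⟨fun s => φ' s / φ s, ?_, rfl, (hφ'.div hφt ht).congr_deriv (by field_simp)⟩
  filter_upwards [hφ, hφt.continuousAt.eventually_ne ht] with s hs hne using hs.log hne

theorem div_const (hφ : HasTwoJetAt φ a b t) (c : ℝ) :
    HasTwoJetAt (fun s => φ s / c) (a / c) (b / c) t := by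
  obtain ⟨φ', hφ, rfl, hφ'⟩ := hφ
  exact ⟨fun s => φ' s / c, hφ.mono fun s hs => hs.div_const c, rfl, hφ'.div_const c⟩

theorem eq_zero_and_nonpos_of_isLocalMax (h : HasTwoJetAt φ a b t) (hmax : IsLocalMax φ t) :
    a = 0 ∧ b ≤ 0 := by
  have ha : a = 0 := hmax.hasDerivAt_eq_zero h.hasDerivAt
  refine ⟨ha, not_lt.1 fun hb => hb.ne' ?_⟩
  have hcont : ContinuousAt φ t := h.hasDerivAt.continuousAt
  have hconst : φ =ᶠ[𝓝 t] fun _ => φ t := by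
    obtain ⟨φ', hφ, rfl, hφ'⟩ := id h
    have hderiv : deriv φ =ᶠ[𝓝 t] φ' := hφ.mono fun s hs => hs.deriv
    -- A positive second derivative would make `t` a local minimum as well.
    have hmin : IsLocalMin φ t := isLocalMin_of_deriv_deriv_pos
      (by rwa [hderiv.deriv_eq, hφ'.deriv]) (by rw [hderiv.eq_of_nhds, ha]) hcont
    filter_upwards [hmax, hmin] with s h₁ h₂ using le_antisymm h₁ h₂
  exact (h.unique (const (φ t) t) hconst).2

theorem log_test_of_isLocalMax {χ : ℝ → ℝ} {e f : ℝ} (hφ : HasTwoJetAt φ a b t)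
    (hψ : HasTwoJetAt ψ c d t) (hχ : HasTwoJetAt χ e f t) (hφt : 0 < φ t) (hψt : 0 < ψ t)
    (hmax : IsLocalMax (fun s => φ s * ψ s * Real.exp (χ s)) t) :
    a / φ t + c / ψ t + e = 0 ∧
      (b / φ t - (a / φ t) ^ 2) + (d / ψ t - (c / ψ t) ^ 2) + f ≤ 0 := by
  refine (((hφ.log hφt.ne').add (hψ.log hψt.ne')).add hχ).eq_zero_and_nonpos_of_isLocalMax ?_
  have log_eq {s : ℝ} (h₁ : 0 < φ s) (h₂ : 0 < ψ s) :
      Real.log (φ s) + Real.log (ψ s) + χ s = Real.log (φ s * ψ s * Real.exp (χ s)) := by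
    rw [Real.log_mul (by positivity) (by positivity), Real.log_mul h₁.ne' h₂.ne', Real.log_exp]
  filter_upwards [hmax, hφ.hasDerivAt.continuousAt.eventually (lt_mem_nhds hφt),
    hψ.hasDerivAt.continuousAt.eventually (lt_mem_nhds hψt)] with s hs h₁ h₂
  rw [log_eq h₁ h₂, log_eq hφt hψt]
  exact Real.log_le_log (by positivity) hs

theorem mul_sub_sq_eq {σ ω : ℝ → ℝ} {e f k l : ℝ} (hφ : HasTwoJetAt φ a b t)
    (hψ : HasTwoJetAt ψ c d t) (hσ : HasTwoJetAt σ e f t) (hω : HasTwoJetAt ω k l t)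
    (hσt : σ t = 0) (h : (fun s => φ s * ψ s - σ s ^ 2) =ᶠ[𝓝 t] ω) :
    a * ψ t + φ t * c = k ∧ b * ψ t + 2 * a * c + φ t * d - 2 * e ^ 2 = l := by
  have huniq := ((hφ.mul hψ).sub hσ.sq).unique hω h
  simp only [hσt] at huniq
  exact ⟨by linarith [huniq.1], by linarith [huniq.2]⟩

end HasTwoJetAt

/-- The derivative of `g` at `x` in the direction `v`, as a function of `x`, so that it can be
iterated. The value is `0` where `g` is not differentiable. -/
noncomputable def dirDeriv {E : Type*} [NormedAddCommGroup E] [NormedSpace ℝ E] (v : E) (g : E → ℝ)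
    (x : E) : ℝ :=
  fderiv ℝ g x v

local notation "∂[" v "]" => dirDeriv v

section DirDeriv

variable {E : Type*} [NormedAddCommGroup E] [NormedSpace ℝ E]
variable {B : Set E} {g h : E → ℝ} {x : E} {n k : WithTop ℕ∞}

theorem contDiffOn_dirDeriv (hB : IsOpen B) (hg : ContDiffOn ℝ k g B) (hnk : n + 1 ≤ k) (v : E) :
    ContDiffOn ℝ n (∂[v] g) B :=
  (hg.fderiv_of_isOpen hB hnk).clm_apply contDiffOn_const

theorem differentiableAt_of_contDiffOn (hB : IsOpen B) (hg : ContDiffOn ℝ n g B) (hn : n ≠ 0)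
    (hx : x ∈ B) : DifferentiableAt ℝ g x :=
  (hg.contDiffAt (hB.mem_nhds hx)).differentiableAt hn

theorem dirDeriv_congr (hB : IsOpen B) (hgh : EqOn g h B) (v : E) : EqOn (∂[v] g) (∂[v] h) B := by
  intro x hx
  simp only [dirDeriv, (hgh.eventuallyEq_of_mem (hB.mem_nhds hx)).fderiv_eq]

theorem dirDeriv_dirDeriv_eq (hg : ContDiffAt ℝ 2 g x) (v w : E) :
    ∂[v] (∂[w] g) x = fderiv ℝ (fderiv ℝ g) x v w := by
  have hdiff : DifferentiableAt ℝ (fderiv ℝ g) x :=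
    (hg.fderiv_right (m := 1) (by norm_num)).differentiableAt one_ne_zero
  unfold dirDeriv
  simp [fderiv_clm_apply hdiff (differentiableAt_const w)]

theorem dirDeriv_comm (hB : IsOpen B) (hg : ContDiffOn ℝ 2 g B) (v w : E) :
    EqOn (∂[v] (∂[w] g)) (∂[w] (∂[v] g)) B := by
  intro x hx
  have hgx : ContDiffAt ℝ 2 g x := hg.contDiffAt (hB.mem_nhds hx)
  rw [dirDeriv_dirDeriv_eq hgx, dirDeriv_dirDeriv_eq hgx]
  exact hgx.isSymmSndFDerivAt (by simp) v w

theorem dirDeriv_dirDeriv_dirDeriv_comm (hB : IsOpen B) (hg : ContDiffOn ℝ 3 g B) (v w : E) :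
    EqOn (∂[v] (∂[v] (∂[w] g))) (∂[w] (∂[v] (∂[v] g))) B :=
  (dirDeriv_congr hB (dirDeriv_comm hB (hg.of_le (by norm_num)) v w) v).trans
    (dirDeriv_comm hB (contDiffOn_dirDeriv hB hg (by norm_num) v) v w)

theorem dirDeriv_four_comm (hB : IsOpen B) (hg : ContDiffOn ℝ 4 g B) (v w : E) :
    EqOn (∂[v] (∂[v] (∂[w] (∂[w] g)))) (∂[w] (∂[w] (∂[v] (∂[v] g)))) B :=
  (dirDeriv_dirDeriv_dirDeriv_comm hB (contDiffOn_dirDeriv hB hg (by norm_num) w) v w).trans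
    (dirDeriv_congr hB (dirDeriv_dirDeriv_dirDeriv_comm hB (hg.of_le (by norm_num)) v w) w)

theorem abs_dirDeriv_le (g : E → ℝ) (x v : E) : |∂[v] g x| ≤ ‖fderiv ℝ g x‖ * ‖v‖ :=
  (fderiv ℝ g x).le_opNorm v

theorem abs_dirDeriv_dirDeriv_le (hg : ContDiffAt ℝ 2 g x) (v w : E) :
    |∂[v] (∂[w] g) x| ≤ ‖iteratedFDeriv ℝ 2 g x‖ * (‖v‖ * ‖w‖) := by
  simpa [dirDeriv_dirDeriv_eq hg, iteratedFDeriv_two_apply] using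
    (iteratedFDeriv ℝ 2 g x).le_opNorm ![v, w]

theorem apply_self_le_mul_norm_sq {H : E →L[ℝ] E →L[ℝ] ℝ} {C : ℝ}
    (hle : ∀ z, ‖z‖ = 1 → H z z ≤ C) (z : E) : H z z ≤ C * ‖z‖ ^ 2 := by
  rcases eq_or_ne z 0 with rfl | hz
  · simp
  have hpos : 0 < ‖z‖ ^ 2 := by positivity
  have := hle _ (norm_smul_inv_norm (𝕜 := ℝ) hz)
  rw [← div_le_iff₀ hpos]
  refine this.trans_eq' ?_
  simp
  field_simp

theorem norm_iteratedFDeriv_two_le {C : ℝ} (hg : ContDiffAt ℝ 2 g x) (hC : 0 ≤ C)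
    (hnonneg : ∀ v, 0 ≤ ∂[v] (∂[v] g) x) (hle : ∀ v, ‖v‖ = 1 → ∂[v] (∂[v] g) x ≤ C) :
    ‖iteratedFDeriv ℝ 2 g x‖ ≤ C := by
  simp only [dirDeriv_dirDeriv_eq hg] at hnonneg hle
  set H := fderiv ℝ (fderiv ℝ g) x
  have hsymm : LinearMap.IsSymm (ContinuousLinearMap.toBilinForm H) :=
    ⟨fun v w => hg.isSymmSndFDerivAt (by simp) v w⟩
  refine ContinuousMultilinearMap.opNorm_le_bound hC fun v => ?_
  rw [iteratedFDeriv_two_apply, Fin.prod_univ_two, Real.norm_eq_abs]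
  refine abs_le_of_sq_le_sq ?_ (by positivity)
  calc H (v 0) (v 1) ^ 2 ≤ H (v 0) (v 0) * H (v 1) (v 1) :=
        LinearMap.BilinForm.apply_sq_le_of_symm _ hnonneg hsymm (v 0) (v 1)
    _ ≤ (C * ‖v 0‖ ^ 2) * (C * ‖v 1‖ ^ 2) := by
      gcongr
      exacts [hnonneg _, apply_self_le_mul_norm_sq hle _, apply_self_le_mul_norm_sq hle _]
    _ = (C * (‖v 0‖ * ‖v 1‖)) ^ 2 := by ring

theorem tendsto_add_smul (x v : E) : Tendsto (fun s : ℝ => x + s • v) (𝓝 0) (𝓝 x) := by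
  have hcont : ContinuousAt (fun s : ℝ => x + s • v) 0 := by fun_prop
  simpa [ContinuousAt] using hcont

theorem hasDerivAt_add_smul {v : E} {t : ℝ} (hg : DifferentiableAt ℝ g (x + t • v)) :
    HasDerivAt (fun s : ℝ => g (x + s • v)) (∂[v] g (x + t • v)) t := by
  have hline : HasDerivAt (fun s : ℝ => x + s • v) v t := by
    simpa using ((hasDerivAt_id t).smul_const v).const_add x
  exact hg.hasFDerivAt.comp_hasDerivAt t hline

theorem hasTwoJetAt_add_smul {v : E} {t : ℝ} (hB : IsOpen B) (hg : ContDiffOn ℝ 2 g B)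
    (hx : x + t • v ∈ B) :
    HasTwoJetAt (fun s => g (x + s • v)) (∂[v] g (x + t • v)) (∂[v] (∂[v] g) (x + t • v)) t := by
  refine ⟨fun s => ∂[v] g (x + s • v), ?_, rfl, hasDerivAt_add_smul <|
    differentiableAt_of_contDiffOn hB (contDiffOn_dirDeriv hB hg (n := 1) (by norm_num) v)
      one_ne_zero hx⟩
  have hmem : ∀ᶠ s in 𝓝 t, x + s • v ∈ B :=
    (by fun_prop : Continuous fun s : ℝ => x + s • v).continuousAt.eventually (hB.mem_nhds hx)
  filter_upwards [hmem] with s hs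
  exact hasDerivAt_add_smul (differentiableAt_of_contDiffOn hB hg two_ne_zero hs)

theorem hasTwoJetAt_add_smul_zero (hB : IsOpen B) (hg : ContDiffOn ℝ 2 g B) (hx : x ∈ B) (v : E) :
    HasTwoJetAt (fun s => g (x + s • v)) (∂[v] g x) (∂[v] (∂[v] g) x) 0 := by
  simpa using hasTwoJetAt_add_smul (x := x) (v := v) (t := 0) hB hg (by simpa using hx)

/-! ### Convex functions and their sections -/

theorem add_fderiv_le_of_convexOn {y : E} (hg : ConvexOn ℝ B g) (hx : x ∈ B) (hy : y ∈ B)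
    (hdiff : DifferentiableAt ℝ g x) : g x + fderiv ℝ g x (y - x) ≤ g y := by
  have hline : ConvexOn ℝ (Icc (0 : ℝ) 1) (fun s : ℝ => g (x + s • (y - x))) := by
    refine ((hg.comp_affineMap (AffineMap.lineMap x y : ℝ →ᵃ[ℝ] E)).subset
      (fun s hs => hg.1.lineMap_mem hx hy hs) (convex_Icc 0 1)).congr fun s _ => ?_
    simp [AffineMap.lineMap_apply, add_comm]
  have hderiv : HasDerivAt (fun s : ℝ => g (x + s • (y - x))) (fderiv ℝ g x (y - x)) 0 := by
    simpa [dirDeriv] using hasDerivAt_add_smul (g := g) (x := x) (v := y - x) (t := 0)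
      (by simpa using hdiff)
  have hslope := hline.le_slope_of_hasDerivAt (by simp) (by simp) zero_lt_one hderiv
  simp only [slope_def_field, zero_smul, one_smul, add_zero, sub_zero, div_one,
    add_sub_cancel] at hslope
  linarith

theorem apply_smul_le_of_convexOn {y : E} {c : ℝ} (hg : ConvexOn ℝ B g) (h0 : 0 ∈ B) (hy : y ∈ B)
    (hle : g 0 ≤ g y) (hc₀ : 0 ≤ c) (hc₁ : c ≤ 1) : g (c • y) ≤ g y := by
  have := hg.2 h0 hy (sub_nonneg.2 hc₁) hc₀ (by ring)
  rw [smul_zero, zero_add, smul_eq_mul, smul_eq_mul] at this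
  nlinarith

theorem apply_add_smul_le_of_convexOn {v : E} {t K : ℝ} (hg : ConvexOn ℝ B g) (hx : x ∈ B)
    (hxt : x + t • v ∈ B) (hdiff : DifferentiableAt ℝ g (x + t • v)) (ht : 0 ≤ t)
    (hK : ∂[v] g (x + t • v) ≤ K) : g (x + t • v) ≤ g x + K * t := by
  have hsup := add_fderiv_le_of_convexOn hg hxt hx hdiff
  rw [sub_add_cancel_left, map_neg, map_smul, smul_eq_mul] at hsup
  have := mul_le_mul_of_nonneg_left hK ht
  unfold dirDeriv at this
  linarith

theorem dirDeriv_dirDeriv_nonneg_of_convexOn (hB : IsOpen B) (hg : ContDiffOn ℝ 2 g B)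
    (hconv : ConvexOn ℝ B g) (hx : x ∈ B) (v : E) : 0 ≤ ∂[v] (∂[v] g) x := by
  have hjet := (HasTwoJetAt.affine (g x) (∂[v] g x) 0).sub (hasTwoJetAt_add_smul_zero hB hg hx v)
  have hmax : IsLocalMax (fun s : ℝ => g x + s * ∂[v] g x - g (x + s • v)) 0 := by
    filter_upwards [(tendsto_add_smul x v).eventually (hB.mem_nhds hx)] with s hs
    have := add_fderiv_le_of_convexOn hconv hx hs
      (differentiableAt_of_contDiffOn hB hg two_ne_zero hx)
    simp only [add_sub_cancel_left, map_smul, smul_eq_mul] at this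
    simpa [dirDeriv] using this
  linarith [(hjet.eq_zero_and_nonpos_of_isLocalMax hmax).2]

/-- The height of the graph of `g` above its tangent plane at `x₀`; its sublevel sets are the
sections of a convex function. -/
noncomputable def tangentExcess (g : E → ℝ) (x₀ y : E) : ℝ :=
  g y - g x₀ - fderiv ℝ g x₀ (y - x₀)

theorem tangentExcess_self (g : E → ℝ) (x₀ : E) : tangentExcess g x₀ x₀ = 0 := by
  simp [tangentExcess]

theorem contDiffOn_tangentExcess (hg : ContDiffOn ℝ n g B) (x₀ : E) :
    ContDiffOn ℝ n (tangentExcess g x₀) B :=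
  (hg.sub contDiffOn_const).sub
    ((fderiv ℝ g x₀).contDiff.comp (contDiff_id.sub contDiff_const)).contDiffOn

theorem tangentExcess_nonneg {x₀ y : E} (hg : ConvexOn ℝ B g) (hx₀ : x₀ ∈ B) (hy : y ∈ B)
    (hdiff : DifferentiableAt ℝ g x₀) : 0 ≤ tangentExcess g x₀ y := by
  unfold tangentExcess
  linarith [add_fderiv_le_of_convexOn hg hx₀ hy hdiff]

theorem convexOn_tangentExcess (hg : ConvexOn ℝ B g) (x₀ : E) :
    ConvexOn ℝ B (tangentExcess g x₀) := by
  refine ((hg.sub ((fderiv ℝ g x₀).toLinearMap.concaveOn hg.1)).add_const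
    (fderiv ℝ g x₀ x₀ - g x₀)).congr fun y _ => ?_
  simp only [tangentExcess, map_sub, Pi.add_apply, Pi.sub_apply, ContinuousLinearMap.coe_coe]
  ring

theorem dirDeriv_tangentExcess (x₀ v : E) {y : E} (hg : DifferentiableAt ℝ g y) :
    ∂[v] (tangentExcess g x₀) y = ∂[v] g y - ∂[v] g x₀ := by
  have hder : HasFDerivAt (tangentExcess g x₀) (fderiv ℝ g y - fderiv ℝ g x₀) y := by
    have hT : HasFDerivAt (fun z => fderiv ℝ g x₀ (z - x₀)) (fderiv ℝ g x₀) y :=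
      (fderiv ℝ g x₀).hasFDerivAt.comp y ((hasFDerivAt_id y).sub_const x₀)
    exact (hg.hasFDerivAt.sub_const (g x₀)).sub hT
  simp [dirDeriv, hder.fderiv]

theorem dirDeriv_dirDeriv_tangentExcess (hB : IsOpen B) (hg : ContDiffOn ℝ 2 g B) (x₀ v w : E) :
    EqOn (∂[v] (∂[w] (tangentExcess g x₀))) (∂[v] (∂[w] g)) B := by
  intro y hy
  have hfst : EqOn (∂[w] (tangentExcess g x₀)) (fun z => ∂[w] g z - ∂[w] g x₀) B := fun z hz =>
    dirDeriv_tangentExcess x₀ w (differentiableAt_of_contDiffOn hB hg two_ne_zero hz)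
  rw [dirDeriv_congr hB hfst v hy]
  change fderiv ℝ (fun z => ∂[w] g z - ∂[w] g x₀) y v = _
  rw [fderiv_sub_const, dirDeriv]

theorem dirDeriv_const_sub_tangentExcess (c : ℝ) (x₀ v : E) (hg : DifferentiableAt ℝ g x) :
    ∂[v] (fun y => c - tangentExcess g x₀ y) x = ∂[v] g x₀ - ∂[v] g x := by
  rw [dirDeriv, fderiv_const_sub, neg_apply, ← dirDeriv, dirDeriv_tangentExcess x₀ v hg, neg_sub]

theorem dirDeriv_dirDeriv_const_sub_tangentExcess (hB : IsOpen B)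
    (hg : ContDiffOn ℝ 2 g B) (hx : x ∈ B) (c : ℝ) (x₀ v : E) :
    ∂[v] (∂[v] (fun y => c - tangentExcess g x₀ y)) x = -∂[v] (∂[v] g) x := by
  have hfst : EqOn (∂[v] (fun y => c - tangentExcess g x₀ y)) (fun y => ∂[v] g x₀ - ∂[v] g y) B :=
    fun y hy => dirDeriv_const_sub_tangentExcess c x₀ v
      (differentiableAt_of_contDiffOn hB hg two_ne_zero hy)
  rw [dirDeriv_congr hB hfst v hx, dirDeriv, fderiv_const_sub, neg_apply, dirDeriv]

/-! ### Pogorelov's inequality at a maximum point -/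

theorem pogorelov_algebraic_inequality
    {l k p₁ p₂ a b n ψ ψ₁ ψ₂ ψ₁₁ u₁₁₁ u₁₁₂ u₁₂₂ u₂₂₂ u₁₁₁₁ u₁₁₂₂ : ℝ} (hl : 0 < l) (hk : 0 < k)
    (hcrit₁ : u₁₁₁ / l + a + p₁ * l = 0) (hcrit₂ : u₁₁₂ / l + b + p₂ * k = 0)
    (hsec₁ : u₁₁₁₁ / l - (u₁₁₁ / l) ^ 2 + (-l / n - a ^ 2) +
      (l ^ 2 + p₁ * u₁₁₁ + p₂ * u₁₁₂) ≤ 0)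
    (hsec₂ : u₁₁₂₂ / l - (u₁₁₂ / l) ^ 2 + (-k / n - b ^ 2) +
      (k ^ 2 + p₁ * u₁₂₂ + p₂ * u₂₂₂) ≤ 0)
    (hψ : l * k = ψ) (hψ₁ : u₁₁₁ * k + l * u₁₂₂ = ψ₁) (hψ₂ : u₁₁₂ * k + l * u₂₂₂ = ψ₂)
    (hψ₁₁ : u₁₁₁₁ * k + 2 * u₁₁₁ * u₁₂₂ + l * u₁₁₂₂ - 2 * u₁₁₂ ^ 2 = ψ₁₁) :
    ψ₁₁ / l + 2 * (a + p₁ * l) * ψ₁ / l + 2 * ψ * (p₁ * a + p₂ * b) - 2 * ψ / n + ψ * (l + k) +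
      p₁ * ψ₁ + p₂ * ψ₂ ≤ 0 := by
  have hu₁₁₁ : u₁₁₁ = -(a + p₁ * l) * l := (div_eq_iff hl.ne').1 (by linarith)
  have hu₁₁₂ : u₁₁₂ = -(b + p₂ * k) * l := (div_eq_iff hl.ne').1 (by linarith)
  -- Contract the second-order conditions with the cofactors `(k, l)` of the Hessian.
  have hsum := add_nonpos (mul_nonpos_of_nonneg_of_nonpos hk.le hsec₁)
    (mul_nonpos_of_nonneg_of_nonpos hl.le hsec₂)
  have hdrop : 0 ≤ ψ * p₁ ^ 2 * l + ψ * p₂ ^ 2 * k := by subst hψ; positivity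
  have hid : ψ₁₁ / l + 2 * (a + p₁ * l) * ψ₁ / l + 2 * ψ * (p₁ * a + p₂ * b) - 2 * ψ / n +
      ψ * (l + k) + p₁ * ψ₁ + p₂ * ψ₂ + (ψ * p₁ ^ 2 * l + ψ * p₂ ^ 2 * k) =
      k * (u₁₁₁₁ / l - (u₁₁₁ / l) ^ 2 + (-l / n - a ^ 2) + (l ^ 2 + p₁ * u₁₁₁ + p₂ * u₁₁₂)) +
      l * (u₁₁₂₂ / l - (u₁₁₂ / l) ^ 2 + (-k / n - b ^ 2) +
        (k ^ 2 + p₁ * u₁₂₂ + p₂ * u₂₂₂)) := by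
    subst hψ hψ₁ hψ₂ hψ₁₁ hu₁₁₁ hu₁₁₂
    simp only [div_eq_mul_inv]
    field_simp
    ring
  linarith

theorem log_test_pogorelov {u η : E → ℝ} {e e' : E} (hB : IsOpen B) (hx : x ∈ B)
    (hu : ContDiffOn ℝ 4 u B) (hη : ContDiffOn ℝ 2 η B) (hηx : 0 < η x) (hl : 0 < ∂[e] (∂[e] u) x)
    (hmax : IsLocalMax
      (fun y => η y * ∂[e] (∂[e] u) y * Real.exp ((∂[e] u y ^ 2 + ∂[e'] u y ^ 2) / 2)) x) (v : E) :
    ∂[v] (∂[e] (∂[e] u)) x / ∂[e] (∂[e] u) x + ∂[v] η x / η x +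
        (∂[e] u x * ∂[v] (∂[e] u) x + ∂[e'] u x * ∂[v] (∂[e'] u) x) = 0 ∧
      (∂[v] (∂[v] (∂[e] (∂[e] u))) x / ∂[e] (∂[e] u) x -
          (∂[v] (∂[e] (∂[e] u)) x / ∂[e] (∂[e] u) x) ^ 2) +
        (∂[v] (∂[v] η) x / η x - (∂[v] η x / η x) ^ 2) +
        (∂[v] (∂[e] u) x ^ 2 + ∂[v] (∂[e'] u) x ^ 2 + ∂[e] u x * ∂[v] (∂[v] (∂[e] u)) x +
          ∂[e'] u x * ∂[v] (∂[v] (∂[e'] u)) x) ≤ 0 := by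
  have hu₁ (w : E) : ContDiffOn ℝ 3 (∂[w] u) B := contDiffOn_dirDeriv hB hu (by norm_num) w
  have hu₂ : ContDiffOn ℝ 2 (∂[e] (∂[e] u)) B := contDiffOn_dirDeriv hB (hu₁ e) (by norm_num) e
  have hjet (w : E) := (hasTwoJetAt_add_smul_zero hB ((hu₁ w).of_le (by norm_num)) hx v).sq
  have htest := (hasTwoJetAt_add_smul_zero hB hη hx v).log_test_of_isLocalMax
    (hasTwoJetAt_add_smul_zero hB hu₂ hx v) (((hjet e).add (hjet e')).div_const 2)
    (by simpa using hηx) (by simpa using hl)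
    (by simpa only [IsLocalMax, IsMaxFilter, zero_smul, add_zero] using
      (tendsto_add_smul x v).eventually hmax)
  simp only [zero_smul, add_zero] at htest
  constructor <;> linarith [htest.1, htest.2]

theorem dirDeriv_det_eq {u ψ : E → ℝ} {e e' : E} (hB : IsOpen B) (hx : x ∈ B)
    (hu : ContDiffOn ℝ 4 u B) (hψ : ContDiffOn ℝ 2 ψ B)
    (hdet : EqOn (fun y => ∂[e] (∂[e] u) y * ∂[e'] (∂[e'] u) y - ∂[e] (∂[e'] u) y ^ 2) ψ B)
    (hdiag : ∂[e] (∂[e'] u) x = 0) (v : E) :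
    ∂[v] (∂[e] (∂[e] u)) x * ∂[e'] (∂[e'] u) x + ∂[e] (∂[e] u) x * ∂[v] (∂[e'] (∂[e'] u)) x =
        ∂[v] ψ x ∧
      ∂[v] (∂[v] (∂[e] (∂[e] u))) x * ∂[e'] (∂[e'] u) x +
        2 * ∂[v] (∂[e] (∂[e] u)) x * ∂[v] (∂[e'] (∂[e'] u)) x +
        ∂[e] (∂[e] u) x * ∂[v] (∂[v] (∂[e'] (∂[e'] u))) x -
        2 * ∂[v] (∂[e] (∂[e'] u)) x ^ 2 = ∂[v] (∂[v] ψ) x := by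
  have hjet (w z : E) := hasTwoJetAt_add_smul_zero hB (contDiffOn_dirDeriv hB
    (contDiffOn_dirDeriv hB hu (n := 3) (by norm_num) z) (n := 2) (by norm_num) w) hx v
  simpa only [zero_smul, add_zero] using (hjet e e).mul_sub_sq_eq (hjet e' e') (hjet e e')
    (hasTwoJetAt_add_smul_zero hB hψ hx v) (by simpa using hdiag)
    (by filter_upwards [(tendsto_add_smul x v).eventually (hB.mem_nhds hx)] with s hs
        using hdet hs)

theorem pogorelov_inequality {u η ψ : E → ℝ} {e e' : E} (hB : IsOpen B) (hx : x ∈ B)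
    (hu : ContDiffOn ℝ 4 u B) (hη : ContDiffOn ℝ 2 η B) (hψ : ContDiffOn ℝ 2 ψ B)
    (hηe : ∂[e] (∂[e] η) x = -∂[e] (∂[e] u) x) (hηe' : ∂[e'] (∂[e'] η) x = -∂[e'] (∂[e'] u) x)
    (hηx : 0 < η x) (hl : 0 < ∂[e] (∂[e] u) x) (hk : 0 < ∂[e'] (∂[e'] u) x)
    (hdet : EqOn (fun y => ∂[e] (∂[e] u) y * ∂[e'] (∂[e'] u) y - ∂[e] (∂[e'] u) y ^ 2) ψ B)
    (hdiag : ∂[e] (∂[e'] u) x = 0)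
    (hmax : IsLocalMax
      (fun y => η y * ∂[e] (∂[e] u) y * Real.exp ((∂[e] u y ^ 2 + ∂[e'] u y ^ 2) / 2)) x) :
    ∂[e] (∂[e] ψ) x / ∂[e] (∂[e] u) x +
      2 * (∂[e] η x / η x + ∂[e] u x * ∂[e] (∂[e] u) x) * ∂[e] ψ x / ∂[e] (∂[e] u) x +
      2 * ψ x * (∂[e] u x * (∂[e] η x / η x) + ∂[e'] u x * (∂[e'] η x / η x)) - 2 * ψ x / η x +
      ψ x * (∂[e] (∂[e] u) x + ∂[e'] (∂[e'] u) x) + ∂[e] u x * ∂[e] ψ x +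
      ∂[e'] u x * ∂[e'] ψ x ≤ 0 := by
  have hdiag' : ∂[e'] (∂[e] u) x = 0 := dirDeriv_comm hB (hu.of_le (by norm_num)) e' e hx ▸ hdiag
  have hu3 : ContDiffOn ℝ 3 u B := hu.of_le (by norm_num)
  have h112 := dirDeriv_dirDeriv_dirDeriv_comm hB hu3 e e' hx
  have h122 := dirDeriv_dirDeriv_dirDeriv_comm hB hu3 e' e hx
  have h1122 := dirDeriv_four_comm hB hu e e' hx
  obtain ⟨hcrit₁, hsec₁⟩ := log_test_pogorelov hB hx hu hη hηx hl hmax e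
  obtain ⟨hcrit₂, hsec₂⟩ := log_test_pogorelov hB hx hu hη hηx hl hmax e'
  obtain ⟨hψ₁, hψ₁₁⟩ := dirDeriv_det_eq hB hx hu hψ hdet hdiag e
  obtain ⟨hψ₂, -⟩ := dirDeriv_det_eq hB hx hu hψ hdet hdiag e'
  have hψ₀ := hdet hx
  simp only [hdiag, hdiag', hηe, hηe', h112, h122, h1122, mul_zero, add_zero, zero_add, sub_zero,
    zero_pow two_ne_zero] at hcrit₁ hcrit₂ hsec₁ hsec₂ hψ₁ hψ₁₁ hψ₀
  exact pogorelov_algebraic_inequality hl hk hcrit₁ hcrit₂ hsec₁ hsec₂ hψ₀ hψ₁ hψ₂ hψ₁₁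

theorem dirDeriv_mul_one_add_sq_add_sq {f p q : E → ℝ} (hB : IsOpen B) (hx : x ∈ B)
    (hf : ContDiffOn ℝ 2 f B) (hp : ContDiffOn ℝ 2 p B) (hq : ContDiffOn ℝ 2 q B) (v : E) :
    ∂[v] (fun y => f y * (1 + p y ^ 2 + q y ^ 2) ^ 2) x =
        ∂[v] f x * (1 + p x ^ 2 + q x ^ 2) ^ 2 +
          4 * f x * (1 + p x ^ 2 + q x ^ 2) * (p x * ∂[v] p x + q x * ∂[v] q x) ∧
      ∂[v] (∂[v] (fun y => f y * (1 + p y ^ 2 + q y ^ 2) ^ 2)) x =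
        ∂[v] (∂[v] f) x * (1 + p x ^ 2 + q x ^ 2) ^ 2 +
          8 * ∂[v] f x * (1 + p x ^ 2 + q x ^ 2) * (p x * ∂[v] p x + q x * ∂[v] q x) +
          8 * f x * (p x * ∂[v] p x + q x * ∂[v] q x) ^ 2 +
          4 * f x * (1 + p x ^ 2 + q x ^ 2) *
            (∂[v] p x ^ 2 + p x * ∂[v] (∂[v] p) x + ∂[v] q x ^ 2 + q x * ∂[v] (∂[v] q) x) := by
  have hψ : ContDiffOn ℝ 2 (fun y => f y * (1 + p y ^ 2 + q y ^ 2) ^ 2) B :=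
    hf.mul (((contDiffOn_const.add (hp.pow 2)).add (hq.pow 2)).pow 2)
  have hjet := (hasTwoJetAt_add_smul_zero hB hf hx v).mul
    (((HasTwoJetAt.const 1 0).add (hasTwoJetAt_add_smul_zero hB hp hx v).sq).add
      (hasTwoJetAt_add_smul_zero hB hq hx v).sq).sq
  have huniq := (hasTwoJetAt_add_smul_zero hB hψ hx v).unique hjet EventuallyEq.rfl
  simp only [zero_smul, add_zero] at huniq
  constructor <;> linarith [huniq.1, huniq.2]

theorem abs_mul_le_pow_add {y z Λ : ℝ} {i j : ℕ} (hy : |y| ≤ Λ ^ i) (hz : |z| ≤ Λ ^ j) :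
    |y * z| ≤ Λ ^ (i + j) := by
  rw [abs_mul, pow_add]
  exact mul_le_mul hy hz (abs_nonneg z) ((abs_nonneg y).trans hy)

theorem abs_prescribed_curvature_terms_le {f₁ f₂ g W p₁ p₂ Λ : ℝ} (hΛ : 1 ≤ Λ) (hW : |W| ≤ Λ)
    (hf₁ : |f₁| ≤ Λ) (hf₂ : |f₂| ≤ Λ) (hg : |g| ≤ Λ) (hp₁ : |p₁| ≤ Λ) (hp₂ : |p₂| ≤ Λ) :
    |g * W ^ 2 + 8 * (f₁ * W * p₁) + 3 * (p₁ * f₁ * W ^ 2) + p₂ * f₂ * W ^ 2| ≤ 13 * Λ ^ 4 := by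
  have hW₂ : |W ^ 2| ≤ Λ ^ 2 := by rw [abs_pow]; gcongr
  have h34 : Λ ^ 3 ≤ Λ ^ 4 := pow_le_pow_right₀ hΛ (by norm_num)
  rw [← pow_one Λ] at hW hf₁ hf₂ hg hp₁ hp₂
  have b₁ : |g * W ^ 2| ≤ Λ ^ 3 := abs_mul_le_pow_add hg hW₂
  have b₂ : |f₁ * W * p₁| ≤ Λ ^ 3 := abs_mul_le_pow_add (abs_mul_le_pow_add hf₁ hW) hp₁
  have b₃ : |p₁ * f₁ * W ^ 2| ≤ Λ ^ 4 := abs_mul_le_pow_add (abs_mul_le_pow_add hp₁ hf₁) hW₂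
  have b₄ : |p₂ * f₂ * W ^ 2| ≤ Λ ^ 4 := abs_mul_le_pow_add (abs_mul_le_pow_add hp₂ hf₂) hW₂
  rw [abs_le] at *
  constructor <;> linarith

theorem abs_cutoff_gradient_terms_le {f g W p₁ p₂ n₁ n₂ Λ : ℝ} (hΛ : 1 ≤ Λ) (hW : |W| ≤ Λ)
    (hf : |f| ≤ Λ) (hg : |g| ≤ Λ) (hp₁ : |p₁| ≤ Λ) (hp₂ : |p₂| ≤ Λ) (hn₁ : |n₁| ≤ Λ)
    (hn₂ : |n₂| ≤ Λ) :
    |4 * (f * W * p₁ * n₁) - 4 * (f * W * p₂ * n₂) + 2 * (f * W ^ 2 * p₁ * n₁) +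
      2 * (f * W ^ 2 * p₂ * n₂) + 2 * (n₁ * g * W ^ 2) - 2 * (f * W ^ 2)| ≤ 16 * Λ ^ 5 := by
  have hW₂ : |W ^ 2| ≤ Λ ^ 2 := by rw [abs_pow]; gcongr
  have h35 : Λ ^ 3 ≤ Λ ^ 5 := pow_le_pow_right₀ hΛ (by norm_num)
  have h45 : Λ ^ 4 ≤ Λ ^ 5 := pow_le_pow_right₀ hΛ (by norm_num)
  rw [← pow_one Λ] at hW hf hg hp₁ hp₂ hn₁ hn₂
  have hfW := abs_mul_le_pow_add hf hW
  have hfW₂ : |f * W ^ 2| ≤ Λ ^ 3 := abs_mul_le_pow_add hf hW₂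
  have b₁ : |f * W * p₁ * n₁| ≤ Λ ^ 4 := abs_mul_le_pow_add (abs_mul_le_pow_add hfW hp₁) hn₁
  have b₂ : |f * W * p₂ * n₂| ≤ Λ ^ 4 := abs_mul_le_pow_add (abs_mul_le_pow_add hfW hp₂) hn₂
  have b₃ : |f * W ^ 2 * p₁ * n₁| ≤ Λ ^ 5 := abs_mul_le_pow_add (abs_mul_le_pow_add hfW₂ hp₁) hn₁
  have b₄ : |f * W ^ 2 * p₂ * n₂| ≤ Λ ^ 5 := abs_mul_le_pow_add (abs_mul_le_pow_add hfW₂ hp₂) hn₂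
  have b₅ : |n₁ * g * W ^ 2| ≤ Λ ^ 4 := abs_mul_le_pow_add (abs_mul_le_pow_add hn₁ hg) hW₂
  rw [abs_le] at *
  constructor <;> linarith

theorem mul_mul_le_of_pogorelov_inequality {l k p₁ p₂ n n₁ n₂ f f₁ f₂ f₁₁ W m Λ : ℝ} (hl : 1 ≤ l)
    (hk : 0 < k) (hn : 0 < n) (hm : 0 < m) (hmf : m ≤ f) (hW : 1 ≤ W) (hΛ : 1 ≤ Λ)
    (hfΛ : f ≤ Λ) (hWΛ : W ≤ Λ) (hf₁ : |f₁| ≤ Λ) (hf₂ : |f₂| ≤ Λ) (hf₁₁ : |f₁₁| ≤ Λ)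
    (hp₁ : |p₁| ≤ Λ) (hp₂ : |p₂| ≤ Λ) (hn₁ : |n₁| ≤ Λ) (hn₂ : |n₂| ≤ Λ)
    (hineq : f * W ^ 2 * l + (8 * f * p₁ ^ 2 * l + 4 * f * W * l + 8 * f * W * p₁ ^ 2 * l +
        f * W ^ 2 * k) + (f₁₁ / l * W ^ 2 + 8 * (f₁ * W * p₁) + 3 * (p₁ * f₁ * W ^ 2) +
        p₂ * f₂ * W ^ 2) +
      (4 * (f * W * p₁ * n₁) - 4 * (f * W * p₂ * n₂) + 2 * (f * W ^ 2 * p₁ * n₁) +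
        2 * (f * W ^ 2 * p₂ * n₂) + 2 * (n₁ * (f₁ / l) * W ^ 2) - 2 * (f * W ^ 2)) / n ≤ 0) :
    m * (n * l) ≤ 13 * Λ ^ 4 * n + 16 * Λ ^ 5 := by
  have hf : 0 < f := hm.trans_le hmf
  have div_le {y : ℝ} (hy : |y| ≤ Λ) : |y / l| ≤ Λ := by
    rw [abs_div, abs_of_pos (zero_lt_one.trans_le hl)]
    exact (div_le_self (abs_nonneg y) hl).trans hy
  have hfΛ' : |f| ≤ Λ := (abs_of_pos hf).trans_le hfΛ
  have hWΛ' : |W| ≤ Λ := (abs_of_pos (zero_lt_one.trans_le hW)).trans_le hWΛ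
  have hcurv := abs_prescribed_curvature_terms_le hΛ hWΛ' hf₁ hf₂ (div_le hf₁₁) hp₁ hp₂
  have hgrad := abs_cutoff_gradient_terms_le hΛ hWΛ' hfΛ' (div_le hf₁) hp₁ hp₂ hn₁ hn₂
  have hml : m * l ≤ f * W ^ 2 * l := by
    gcongr
    exact hmf.trans (le_mul_of_one_le_right hf.le (one_le_pow₀ hW))
  have hpos : 0 ≤ 8 * f * p₁ ^ 2 * l + 4 * f * W * l + 8 * f * W * p₁ ^ 2 * l + f * W ^ 2 * k := by
    positivity
  have hdiv := div_le_div_of_nonneg_right (neg_le_of_abs_le hgrad) hn.le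
  have hsum : m * l ≤ 13 * Λ ^ 4 + 16 * Λ ^ 5 / n := by
    rw [neg_div] at hdiv
    linarith [neg_le_of_abs_le hcurv]
  calc m * (n * l) = n * (m * l) := by ring
    _ ≤ n * (13 * Λ ^ 4 + 16 * Λ ^ 5 / n) := by gcongr
    _ = 13 * Λ ^ 4 * n + 16 * Λ ^ 5 := by field_simp

theorem pogorelov_lhs_eq {l k p₁ p₂ n n₁ n₂ f f₁ f₂ f₁₁ W u₁₁₁ u₁₁₂ : ℝ} (hl : l ≠ 0)
    (hcrit₁ : u₁₁₁ / l + n₁ / n + p₁ * l = 0) (hcrit₂ : u₁₁₂ / l + n₂ / n + p₂ * k = 0) :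
    f * W ^ 2 * l + (8 * f * p₁ ^ 2 * l + 4 * f * W * l + 8 * f * W * p₁ ^ 2 * l +
        f * W ^ 2 * k) + (f₁₁ / l * W ^ 2 + 8 * (f₁ * W * p₁) + 3 * (p₁ * f₁ * W ^ 2) +
        p₂ * f₂ * W ^ 2) +
      (4 * (f * W * p₁ * n₁) - 4 * (f * W * p₂ * n₂) + 2 * (f * W ^ 2 * p₁ * n₁) +
        2 * (f * W ^ 2 * p₂ * n₂) + 2 * (n₁ * (f₁ / l) * W ^ 2) - 2 * (f * W ^ 2)) / n =
    (f₁₁ * W ^ 2 + 8 * f₁ * W * (p₁ * l) + 8 * f * (p₁ * l) ^ 2 +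
        4 * f * W * (l ^ 2 + p₁ * u₁₁₁ + p₂ * u₁₁₂)) / l +
      2 * (n₁ / n + p₁ * l) * (f₁ * W ^ 2 + 4 * f * W * (p₁ * l)) / l +
      2 * (f * W ^ 2) * (p₁ * (n₁ / n) + p₂ * (n₂ / n)) - 2 * (f * W ^ 2) / n +
      f * W ^ 2 * (l + k) + p₁ * (f₁ * W ^ 2 + 4 * f * W * (p₁ * l)) +
      p₂ * (f₂ * W ^ 2 + 4 * f * W * (p₂ * k)) := by
  have hu₁₁₁ : u₁₁₁ = -(n₁ / n + p₁ * l) * l := (div_eq_iff hl).1 (by linarith)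
  have hu₁₁₂ : u₁₁₂ = -(n₂ / n + p₂ * k) * l := (div_eq_iff hl).1 (by linarith)
  subst hu₁₁₁ hu₁₁₂
  simp only [div_eq_mul_inv]
  field_simp
  ring

theorem pogorelov_bound {u η f : E → ℝ} {e e' : E} {m Λ : ℝ} (hB : IsOpen B) (hx : x ∈ B)
    (hu : ContDiffOn ℝ 4 u B) (hη : ContDiffOn ℝ 2 η B) (hf : ContDiffOn ℝ 2 f B)
    (hηe : ∂[e] (∂[e] η) x = -∂[e] (∂[e] u) x) (hηe' : ∂[e'] (∂[e'] η) x = -∂[e'] (∂[e'] u) x)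
    (hηx : 0 < η x) (hl : 1 ≤ ∂[e] (∂[e] u) x) (hk : 0 < ∂[e'] (∂[e'] u) x)
    (heq : EqOn (fun y => ∂[e] (∂[e] u) y * ∂[e'] (∂[e'] u) y - ∂[e] (∂[e'] u) y ^ 2)
      (fun y => f y * (1 + ∂[e] u y ^ 2 + ∂[e'] u y ^ 2) ^ 2) B)
    (hdiag : ∂[e] (∂[e'] u) x = 0)
    (hmax : IsLocalMax
      (fun y => η y * ∂[e] (∂[e] u) y * Real.exp ((∂[e] u y ^ 2 + ∂[e'] u y ^ 2) / 2)) x)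
    (hm : 0 < m) (hmf : m ≤ f x) (hΛ : 1 ≤ Λ) (hfΛ : f x ≤ Λ)
    (hWΛ : 1 + ∂[e] u x ^ 2 + ∂[e'] u x ^ 2 ≤ Λ) (hf₁₁ : |∂[e] (∂[e] f) x| ≤ Λ)
    (hbound : ∀ v ∈ ({e, e'} : Set E), |∂[v] f x| ≤ Λ ∧ |∂[v] u x| ≤ Λ ∧ |∂[v] η x| ≤ Λ) :
    m * (η x * ∂[e] (∂[e] u) x) ≤ 13 * Λ ^ 4 * η x + 16 * Λ ^ 5 := by
  have hl₀ : 0 < ∂[e] (∂[e] u) x := zero_lt_one.trans_le hl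
  have hu₁ (w : E) : ContDiffOn ℝ 2 (∂[w] u) B := contDiffOn_dirDeriv hB hu (by norm_num) w
  have hψ : ContDiffOn ℝ 2 (fun y => f y * (1 + ∂[e] u y ^ 2 + ∂[e'] u y ^ 2) ^ 2) B :=
    hf.mul (((contDiffOn_const.add ((hu₁ e).pow 2)).add ((hu₁ e').pow 2)).pow 2)
  have hdiag' : ∂[e'] (∂[e] u) x = 0 := dirDeriv_comm hB (hu.of_le (by norm_num)) e' e hx ▸ hdiag
  have h112 := dirDeriv_dirDeriv_dirDeriv_comm hB (hu.of_le (by norm_num)) e e' hx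
  have hcrit₁ := (log_test_pogorelov hB hx hu hη hηx hl₀ hmax e).1
  have hcrit₂ := (log_test_pogorelov hB hx hu hη hηx hl₀ hmax e').1
  obtain ⟨hψ₁, hψ₁₁⟩ := dirDeriv_mul_one_add_sq_add_sq hB hx hf (hu₁ e) (hu₁ e') e
  obtain ⟨hψ₂, -⟩ := dirDeriv_mul_one_add_sq_add_sq hB hx hf (hu₁ e) (hu₁ e') e'
  have hpog := pogorelov_inequality hB hx hu hη hψ hηe hηe' hηx hl₀ hk heq hdiag hmax
  rw [hψ₁₁, hψ₁, hψ₂] at hpog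
  simp only [hdiag, hdiag', h112, mul_zero, add_zero, zero_add,
    zero_pow two_ne_zero] at hpog hcrit₁ hcrit₂
  obtain ⟨hf₁, hp₁, hn₁⟩ := hbound e (by simp)
  obtain ⟨hf₂, hp₂, hn₂⟩ := hbound e' (by simp)
  refine mul_mul_le_of_pogorelov_inequality hl hk hηx hm hmf
    (by nlinarith only [sq_nonneg (∂[e] u x), sq_nonneg (∂[e'] u x)]) hΛ hfΛ hWΛ hf₁ hf₂ hf₁₁
    hp₁ hp₂ hn₁ hn₂ ((pogorelov_lhs_eq hl₀.ne' hcrit₁ hcrit₂).trans_le hpog)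

/-- Pogorelov's test function, evaluated at a point and a direction. The cutoff factor is positive
exactly on the section of height `ε` at the origin. -/
noncomputable def pogorelovFunction (ε : ℝ) (u : E → ℝ) (z : E × E) : ℝ :=
  (ε - tangentExcess u 0 z.1) * ∂[z.2] (∂[z.2] u) z.1 * Real.exp (‖fderiv ℝ u z.1‖ ^ 2 / 2)

theorem continuousOn_pogorelovFunction {u : E → ℝ} (ε : ℝ) (hB : IsOpen B)
    (hu : ContDiffOn ℝ 2 u B) : ContinuousOn (pogorelovFunction ε u) (B ×ˢ univ) := by
  have hfst : ContDiffOn ℝ 1 (fderiv ℝ u) B := hu.fderiv_of_isOpen hB (by norm_num)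
  have hsnd : ContinuousOn (fderiv ℝ (fderiv ℝ u)) B :=
    (hfst.fderiv_of_isOpen (m := 0) hB (by norm_num)).continuousOn
  have hmem : MapsTo Prod.fst (B ×ˢ (univ : Set E)) B := fun z hz => hz.1
  have hessian : ContinuousOn (fun z : E × E => ∂[z.2] (∂[z.2] u) z.1) (B ×ˢ univ) :=
    (((hsnd.comp continuousOn_fst hmem).clm_apply continuousOn_snd).clm_apply
      continuousOn_snd).congr fun z hz =>
        dirDeriv_dirDeriv_eq (hu.contDiffAt (hB.mem_nhds hz.1)) z.2 z.2
  have hexcess := (contDiffOn_tangentExcess hu 0).continuousOn.comp continuousOn_fst hmem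
  have hgrad := hfst.continuousOn.comp continuousOn_fst hmem
  exact ((continuousOn_const.sub hexcess).mul hessian).mul
    (Real.continuous_exp.comp_continuousOn ((hgrad.norm.pow 2).div_const 2))

theorem dirDeriv_dirDeriv_le_of_isMaxOn {u : E → ℝ} {S : Set E} {ε : ℝ} {e z : E} (hx : x ∈ S)
    (hxε : tangentExcess u 0 x < ε)
    (hmax : IsMaxOn (pogorelovFunction ε u) (S ×ˢ sphere 0 1) (x, e)) (hz : ‖z‖ = 1) :
    ∂[z] (∂[z] u) x ≤ ∂[e] (∂[e] u) x := by
  have hle : pogorelovFunction ε u (x, z) ≤ pogorelovFunction ε u (x, e) :=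
    hmax ⟨hx, mem_sphere_zero_iff_norm.2 hz⟩
  exact le_of_mul_le_mul_left (le_of_mul_le_mul_right hle (Real.exp_pos _)) (sub_pos.2 hxε)

end DirDeriv

/-! ### Quantitative strict convexity in dimension two -/

/-- The barrier in the variable `t`: it starts at `ε` with slope `-c`, and its second derivative is
`q / (t + ε)`, so that it dips below `0` at `t = ε` while its slope grows logarithmically. -/
noncomputable def logBarrier (ε c q t : ℝ) : ℝ :=
  ε - c * t + q * ((t + ε) * Real.log ((t + ε) / ε) - t)

theorem hasTwoJetAt_logBarrier {ε t : ℝ} (c q : ℝ) (hε : 0 < ε) (ht : 0 < t + ε) :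
    HasTwoJetAt (logBarrier ε c q) (-c + q * Real.log ((t + ε) / ε)) (q / (t + ε)) t := by
  have hlog {s : ℝ} (hs : 0 < s + ε) :
      HasDerivAt (fun s => Real.log ((s + ε) / ε)) (1 / (s + ε)) s := by
    refine ((((hasDerivAt_id s).add_const ε).div_const ε).log (by positivity)).congr_deriv ?_
    simp only [id_eq]
    field_simp
  refine ⟨fun s => -c + q * Real.log ((s + ε) / ε), ?_, rfl, ?_⟩
  · filter_upwards [lt_mem_nhds (show -ε < t by linarith)] with s hs
    have hs' : 0 < s + ε := by linarith
    refine ((((hasDerivAt_id s).const_mul c).const_sub ε).add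
      (((((hasDerivAt_id s).add_const ε).mul (hlog hs')).sub (hasDerivAt_id s)).const_mul
        q)).congr_deriv ?_
    simp only [id_eq]
    field_simp
    ring
  · exact (((hlog ht).const_mul q).const_add (-c)).congr_deriv (by ring)

theorem logBarrier_zero {ε : ℝ} (c q : ℝ) (hε : ε ≠ 0) : logBarrier ε c q 0 = ε := by
  simp [logBarrier, hε]

theorem sub_mul_le_logBarrier {ε q t : ℝ} (c : ℝ) (hε : 0 < ε) (hq : 0 ≤ q) (ht : 0 ≤ t) :
    ε - c * t ≤ logBarrier ε c q t := by
  have hpos : 0 < t + ε := by positivity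
  have hlog := mul_le_mul_of_nonneg_left
    (Real.one_sub_inv_le_log_of_pos (x := (t + ε) / ε) (by positivity)) hpos.le
  have hleft : (t + ε) * (1 - ((t + ε) / ε)⁻¹) = t := by field_simp; ring
  have := mul_nonneg hq (sub_nonneg.2 (hleft.symm.trans_le hlog))
  simp only [logBarrier]
  linarith

theorem logBarrier_self_neg {ε c q : ℝ} (hε : 0 < ε) (hq : 0 ≤ q) (hc : 1 + q < c) :
    logBarrier ε c q ε < 0 := by
  have hlog : Real.log ((ε + ε) / ε) ≤ 1 := by
    rw [← two_mul, mul_div_cancel_right₀ _ hε.ne']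
    linarith [Real.log_two_lt_d9]
  calc logBarrier ε c q ε ≤ ε - c * ε + q * ((ε + ε) * 1 - ε) := by unfold logBarrier; gcongr
    _ = (1 + q - c) * ε := by ring
    _ < 0 := mul_neg_of_neg_of_pos (by linarith) hε

theorem exists_add_mul_le_logBarrier {c q h K : ℝ} (hc : 0 ≤ c) (hq : 0 < q) (hh : 0 < h)
    (hK : 0 ≤ K) : ∃ ε, 0 < ε ∧ ε < h ∧ ε + K * h ≤ logBarrier ε c q h := by
  set N := 1 + (c + K) / q with hN
  have hNpos : 0 < N := by positivity
  set ε := h * Real.exp (-N) with hεdef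
  have hε : 0 < ε := by positivity
  have hεh : ε < h := mul_lt_of_lt_one_right hh (Real.exp_lt_one_iff.2 (by linarith))
  have hlog : N ≤ Real.log ((h + ε) / ε) := by
    rw [Real.le_log_iff_exp_le (by positivity), le_div_iff₀ hε, hεdef, mul_left_comm,
      ← Real.exp_add, add_neg_cancel, Real.exp_zero, mul_one]
    linarith
  refine ⟨ε, hε, hεh, ?_⟩
  calc ε + K * h = ε - c * h + q * (h * N - h) := by rw [hN]; field_simp; ring
    _ ≤ logBarrier ε c q h := by
      unfold logBarrier
      gcongr
      linarith

/-- The comparison function on the rectangle `[-r, r] × [0, h]`. The product of its pure second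
derivatives is the constant `2 * A * q`. -/
noncomputable def rectangleBarrier (ε A c q s t : ℝ) : ℝ :=
  A * (t + ε) * s ^ 2 + logBarrier ε c q t

theorem le_rectangleBarrier_of_mem_boundary {ε A c q r h K s t : ℝ} (hε : 0 < ε) (hA : 0 ≤ A)
    (hq : 0 ≤ q) (hAr : c + K ≤ A * r ^ 2) (hh : ε + K * h ≤ logBarrier ε c q h)
    (hs : s ∈ Icc (-r) r) (ht : t ∈ Icc 0 h) (hst : (s, t) ∉ Ioo (-r) r ×ˢ Ioo 0 h) :
    ε + K * t ≤ rectangleBarrier ε A c q s t := by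
  have ht₀ : 0 ≤ t := ht.1
  have hsq : 0 ≤ A * (t + ε) * s ^ 2 := by positivity
  unfold rectangleBarrier
  rcases ht.1.eq_or_lt with rfl | htpos
  · rw [logBarrier_zero c q hε.ne']
    linarith
  rcases ht.2.eq_or_lt with rfl | hth
  · linarith
  have hsr : s ^ 2 = r ^ 2 := by
    rcases hs.1.eq_or_lt with rfl | hs₁
    · ring
    rcases hs.2.eq_or_lt with rfl | hs₂
    · rfl
    exact absurd ⟨⟨hs₁, hs₂⟩, htpos, hth⟩ hst
  have hside : (c + K) * t ≤ A * r ^ 2 * t := by gcongr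
  have : 0 ≤ A * r ^ 2 * ε := by positivity
  rw [hsr]
  linarith [sub_mul_le_logBarrier c hε hq ht₀]

theorem second_deriv_mul_le_of_isLocalMax_sub_rectangleBarrier {G : ℝ → ℝ → ℝ}
    {ε A c q s t a b P Q : ℝ} (hε : 0 < ε) (hA : 0 ≤ A) (ht : 0 ≤ t) (hQ : 0 ≤ Q)
    (hs_jet : HasTwoJetAt (fun σ => G σ t) a P s) (ht_jet : HasTwoJetAt (G s) b Q t)
    (hmax : IsLocalMax (fun z : ℝ × ℝ => G z.1 z.2 - rectangleBarrier ε A c q z.1 z.2) (s, t)) :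
    P * Q ≤ 2 * A * q := by
  have htε : 0 < t + ε := by positivity
  have hid (τ : ℝ) : HasTwoJetAt (fun σ => σ) 1 0 τ := by
    simpa using HasTwoJetAt.affine 0 1 τ
  have hP : P ≤ 2 * A * (t + ε) := by
    have hjet := hs_jet.sub (((HasTwoJetAt.const (A * (t + ε)) s).mul (hid s).sq).add
      (.const (logBarrier ε c q t) s))
    have hmax_s : IsLocalMax (fun σ => G σ t - rectangleBarrier ε A c q σ t) s :=
      hmax.comp_tendsto (g := fun σ => (σ, t)) (by fun_prop : Continuous _).continuousAt
    linarith [(hjet.eq_zero_and_nonpos_of_isLocalMax hmax_s).2]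
  have hQ' : Q * (t + ε) ≤ q := by
    have hjet := ht_jet.sub ((((HasTwoJetAt.const A t).mul ((hid t).add (.const ε t))).mul
      (.const (s ^ 2) t)).add (hasTwoJetAt_logBarrier c q hε htε))
    have hmax_t : IsLocalMax (fun τ => G s τ - rectangleBarrier ε A c q s τ) t :=
      hmax.comp_tendsto (g := fun τ => (s, τ)) (by fun_prop : Continuous _).continuousAt
    rw [← le_div_iff₀ htε]
    linarith [(hjet.eq_zero_and_nonpos_of_isLocalMax hmax_t).2]
  calc P * Q ≤ 2 * A * (t + ε) * Q := by gcongr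
    _ = 2 * A * (Q * (t + ε)) := by ring
    _ ≤ 2 * A * q := by gcongr

theorem continuousOn_rectangleBarrier {ε : ℝ} (A c q : ℝ) (hε : 0 < ε) :
    ContinuousOn (fun z : ℝ × ℝ => rectangleBarrier ε A c q z.1 z.2) (univ ×ˢ Ici 0) := by
  refine ContinuousOn.add (by fun_prop) fun z hz => ?_
  have hz₂ : 0 ≤ z.2 := hz.2
  exact ((hasTwoJetAt_logBarrier c q hε (by positivity)).hasDerivAt.continuousAt.comp
    continuousAt_snd).continuousWithinAt

-- If `G` were at most `ε` on the whole side `t = 0`, it would lie below the barrier on the boundary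
-- but not at `(0, ε)`, so a translate of the barrier would touch it from above inside. The product
-- of the second derivatives of the barrier is only `m / 2`.
theorem exists_lt_of_second_deriv_mul_ge {r h m K : ℝ} (hr : 0 < r) (hh : 0 < h) (hm : 0 < m)
    (hK : 0 ≤ K) : ∃ ε > 0, ∀ G : ℝ → ℝ → ℝ,
      ContinuousOn (fun z : ℝ × ℝ => G z.1 z.2) (Icc (-r) r ×ˢ Icc 0 h) →
      (∀ s ∈ Icc (-r) r, ∀ t ∈ Icc 0 h, 0 ≤ G s t ∧ G s t ≤ G s 0 + K * t) →
      (∀ s ∈ Ioo (-r) r, ∀ t ∈ Ioo 0 h, ∃ a b P Q, HasTwoJetAt (fun σ => G σ t) a P s ∧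
        HasTwoJetAt (G s) b Q t ∧ 0 ≤ Q ∧ m ≤ P * Q) →
      ∃ s ∈ Icc (-r) r, ε < G s 0 := by
  set c := 2 + m / 4 with hc
  set A := 1 + (c + K) / r ^ 2 with hA
  set q := m / (4 * A) with hq
  have hAone : 1 ≤ A := le_add_of_nonneg_right (by positivity)
  have hAr : c + K ≤ A * r ^ 2 := by rw [hA, add_mul, div_mul_cancel₀ _ (by positivity)]; nlinarith
  have hqm : q ≤ m / 4 := by rw [hq]; gcongr; linarith
  have hqpos : 0 < q := by positivity
  obtain ⟨ε, hε, hεh, hbar⟩ := exists_add_mul_le_logBarrier (c := c) (by positivity) hqpos hh hK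
  refine ⟨ε, hε, fun G hcont hG hjets => ?_⟩
  by_contra! hside
  have hD : ((0 : ℝ), ε) ∈ Icc (-r) r ×ˢ Icc 0 h := ⟨⟨by linarith, hr.le⟩, hε.le, hεh.le⟩
  obtain ⟨⟨s, t⟩, ⟨hs, ht⟩, hmax⟩ := (isCompact_Icc.prod isCompact_Icc).exists_isMaxOn ⟨_, hD⟩
    (hcont.sub ((continuousOn_rectangleBarrier A c q hε).mono
      (prod_mono (subset_univ _) Icc_subset_Ici_self)))
  have hpos : 0 < G s t - rectangleBarrier ε A c q s t := by
    refine lt_of_lt_of_le ?_ (hmax hD)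
    have hneg : rectangleBarrier ε A c q 0 ε < 0 := by
      simpa [rectangleBarrier] using logBarrier_self_neg hε hqpos.le (by linarith)
    change 0 < G 0 ε - rectangleBarrier ε A c q 0 ε
    linarith [(hG 0 hD.1 ε hD.2).1]
  have hint : (s, t) ∈ Ioo (-r) r ×ˢ Ioo 0 h := by
    by_contra hbdry
    linarith [le_rectangleBarrier_of_mem_boundary hε (by linarith) hqpos.le hAr hbar hs ht hbdry,
      (hG s hs t ht).2, hside s hs]
  obtain ⟨a, b, P, Q, hs_jet, ht_jet, hQ, hPQ⟩ := hjets s hint.1 t hint.2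
  have hle : P * Q ≤ 2 * A * q := second_deriv_mul_le_of_isLocalMax_sub_rectangleBarrier hε
    (by linarith) ht.1 hQ hs_jet ht_jet (hmax.isLocalMax
      (prod_mem_nhds (Icc_mem_nhds hint.1.1 hint.1.2) (Icc_mem_nhds hint.2.1 hint.2.2)))
  have : 2 * A * q = m / 2 := by rw [hq]; field_simp; norm_num
  linarith

section StrictConvexity

variable {E : Type*} [NormedAddCommGroup E] [InnerProductSpace ℝ E] {e e' : E}

theorem norm_smul_add_smul_sq (he : ‖e‖ = 1) (he' : ‖e'‖ = 1) (hee' : inner ℝ e e' = 0) (a b : ℝ) :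
    ‖a • e + b • e'‖ ^ 2 = a ^ 2 + b ^ 2 := by
  rw [norm_add_sq_real, norm_smul, norm_smul, inner_smul_left, inner_smul_right, he, he', hee']
  simp

theorem half_rectangle_mem_ball {R s t : ℝ} (hR : 0 < R) (he : ‖e‖ = 1) (he' : ‖e'‖ = 1)
    (hee' : inner ℝ e e' = 0) (hs : s ∈ Icc (-(R / 4)) (R / 4)) (ht : t ∈ Icc 0 (R / 2)) :
    (R / 4) • e + s • e + t • e' ∈ ball (0 : E) R := by
  rw [mem_ball_zero_iff, ← sq_lt_sq₀ (norm_nonneg _) hR.le, ← add_smul,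
    norm_smul_add_smul_sq he he' hee']
  have hfst : (R / 4 + s) ^ 2 ≤ (R / 2) ^ 2 := by gcongr <;> linarith [hs.1, hs.2]
  have hsnd : t ^ 2 ≤ (R / 2) ^ 2 := pow_le_pow_left₀ ht.1 ht.2 2
  nlinarith

theorem exists_lt_apply_smul_of_convexOn {R m K : ℝ} (hR : 0 < R) (hm : 0 < m) (hK : 0 ≤ K) :
    ∃ ε > 0, ∀ (w : E → ℝ) (e e' : E), ‖e‖ = 1 → ‖e'‖ = 1 → inner ℝ e e' = 0 →
      ContDiffOn ℝ 2 w (ball 0 R) → ConvexOn ℝ (ball 0 R) w → (∀ x ∈ ball 0 R, 0 ≤ w x) →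
      w 0 = 0 → (∀ x ∈ ball 0 R, ∂[e'] w x ≤ K) →
      (∀ x ∈ ball 0 R, m ≤ ∂[e] (∂[e] w) x * ∂[e'] (∂[e'] w) x) → ε < w ((R / 2) • e) := by
  obtain ⟨ε, hε, H⟩ := exists_lt_of_second_deriv_mul_ge (r := R / 4) (h := R / 2) (by positivity)
    (by positivity) hm hK
  refine ⟨ε, hε, fun w e e' he he' hee' hw hconv hpos hzero hslope hdet => ?_⟩
  have hmem {s t : ℝ} := half_rectangle_mem_ball (s := s) (t := t) hR he he' hee'
  have hjets : ∀ s ∈ Ioo (-(R / 4)) (R / 4), ∀ t ∈ Ioo 0 (R / 2), ∃ a b P Q,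
      HasTwoJetAt (fun σ => w ((R / 4) • e + σ • e + t • e')) a P s ∧
      HasTwoJetAt (fun τ => w ((R / 4) • e + s • e + τ • e')) b Q t ∧ 0 ≤ Q ∧ m ≤ P * Q := by
    intro s hs t ht
    have hx := hmem (Ioo_subset_Icc_self hs) (Ioo_subset_Icc_self ht)
    have hcomm (σ : ℝ) : (R / 4) • e + σ • e + t • e' = (R / 4) • e + t • e' + σ • e := by abel
    have hs_jet := hasTwoJetAt_add_smul isOpen_ball hw (hcomm s ▸ hx)
    simp only [← hcomm] at hs_jet
    exact ⟨_, _, _, _, hs_jet, hasTwoJetAt_add_smul isOpen_ball hw hx,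
      dirDeriv_dirDeriv_nonneg_of_convexOn isOpen_ball hw hconv hx e', hdet _ hx⟩
  obtain ⟨s, hs, hlt⟩ := H (fun s t => w ((R / 4) • e + s • e + t • e'))
    (hw.continuousOn.comp (by fun_prop) fun z hz => hmem hz.1 hz.2)
    (fun s hs t ht => ⟨hpos _ (hmem hs ht), apply_add_smul_le_of_convexOn hconv
      (by simpa using hmem hs ⟨le_rfl, by linarith⟩) (hmem hs ht)
      (differentiableAt_of_contDiffOn isOpen_ball hw two_ne_zero (hmem hs ht)) ht.1
      (hslope _ (hmem hs ht)) |>.trans_eq (by simp)⟩)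
    hjets
  have hend : (R / 2) • e ∈ ball (0 : E) R := by
    simpa [norm_smul, he, abs_of_pos hR] using hR
  have hle : w ((R / 4 + s) • e) ≤ w ((R / 2) • e) := by
    have hcoef : (R / 4 + s) / (R / 2) ≤ 1 := by rw [div_le_one (by positivity)]; linarith [hs.2]
    have := apply_smul_le_of_convexOn hconv (mem_ball_self hR) hend (hzero.trans_le (hpos _ hend))
      (div_nonneg (by linarith [hs.1]) (by positivity)) hcoef
    rwa [smul_smul, div_mul_cancel₀ _ (by positivity)] at this
  simp only [zero_smul, add_zero, ← add_smul] at hlt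
  exact hlt.trans_le hle

end StrictConvexity

/-! ### Orthonormal frames and the Hessian -/

section Frames

variable {E : Type*} [NormedAddCommGroup E] [InnerProductSpace ℝ E] {g : E → ℝ} {x : E}

theorem exists_orthonormalBasis_apply_zero_eq [Fact (Module.finrank ℝ E = 2)] {e : E}
    (he : ‖e‖ = 1) : ∃ b : OrthonormalBasis (Fin 2) ℝ E, b 0 = e := by
  have : FiniteDimensional ℝ E := .of_fact_finrank_eq_two
  have horth : Orthonormal ℝ (({0} : Set (Fin 2)).domRestrict fun _ => e) :=
    ⟨fun _ => he, fun i j hij => absurd (Subsingleton.elim i j) hij⟩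
  obtain ⟨b, hb⟩ := horth.exists_orthonormalBasis_extension_of_card_eq
    (by simpa using Fact.out (p := Module.finrank ℝ E = 2))
  exact ⟨b, hb 0 rfl⟩

theorem det_toMatrix_eq_of_orthonormalBasis {ι : Type*} [Fintype ι] [DecidableEq ι]
    (H : LinearMap.BilinForm ℝ E) (b b' : OrthonormalBasis ι ℝ E) :
    (LinearMap.BilinForm.toMatrix b.toBasis H).det =
      (LinearMap.BilinForm.toMatrix b'.toBasis H).det := by
  have hdet : (b.toBasis.toMatrix b').det * (b.toBasis.toMatrix b').det = 1 := by
    rw [← sq, sq_eq_one_iff]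
    exact b.det_to_matrix_orthonormalBasis_real b'
  rw [← LinearMap.BilinForm.toMatrix_mul_basis_toMatrix b.toBasis b'.toBasis H, Matrix.det_mul,
    Matrix.det_mul, Matrix.det_transpose, OrthonormalBasis.coe_toBasis, mul_right_comm, hdet,
    one_mul]

theorem dirDeriv_det_eq_of_orthonormalBasis (hg : ContDiffAt ℝ 2 g x)
    (b b' : OrthonormalBasis (Fin 2) ℝ E) :
    ∂[b 0] (∂[b 0] g) x * ∂[b 1] (∂[b 1] g) x - ∂[b 0] (∂[b 1] g) x * ∂[b 1] (∂[b 0] g) x =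
      ∂[b' 0] (∂[b' 0] g) x * ∂[b' 1] (∂[b' 1] g) x -
        ∂[b' 0] (∂[b' 1] g) x * ∂[b' 1] (∂[b' 0] g) x := by
  have := det_toMatrix_eq_of_orthonormalBasis
    (ContinuousLinearMap.toBilinForm (fderiv ℝ (fderiv ℝ g) x)) b b'
  simpa [Matrix.det_fin_two, dirDeriv_dirDeriv_eq hg] using this

theorem dirDeriv_sq_add_dirDeriv_sq (b : OrthonormalBasis (Fin 2) ℝ E) (g : E → ℝ) (x : E) :
    ∂[b 0] g x ^ 2 + ∂[b 1] g x ^ 2 = ‖fderiv ℝ g x‖ ^ 2 := by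
  simp [b.norm_dual, Fin.sum_univ_two, dirDeriv]

-- Differentiate `H z z` along the unit circle `z = cos θ • e + sin θ • e'` at `θ = 0`.
theorem apply_add_apply_eq_zero_of_forall_apply_le {e e' : E} (H : E →L[ℝ] E →L[ℝ] ℝ)
    (he : ‖e‖ = 1) (he' : ‖e'‖ = 1) (hee' : inner ℝ e e' = 0)
    (hmax : ∀ z, ‖z‖ = 1 → H z z ≤ H e e) : H e e' + H e' e = 0 := by
  set z : ℝ → E := fun θ => Real.cos θ • e + Real.sin θ • e' with hz
  have hz₀ : z 0 = e := by simp [hz]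
  have hder : HasDerivAt z e' 0 := by
    simpa [Pi.add_def] using
      ((Real.hasDerivAt_cos 0).smul_const e).add ((Real.hasDerivAt_sin 0).smul_const e')
  have hHder : HasDerivAt (fun θ => H (z θ) (z θ)) (H e' e + H e e') 0 := by
    simpa [hz₀] using (H.hasFDerivAt.comp_hasDerivAt 0 hder).clm_apply hder
  have hloc : IsLocalMax (fun θ => H (z θ) (z θ)) 0 := by
    refine .of_forall fun θ => (hmax _ ?_).trans_eq (by simp only [hz₀])
    refine (pow_eq_one_iff_of_nonneg (norm_nonneg _) two_ne_zero).1 ?_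
    rw [norm_smul_add_smul_sq he he' hee', Real.cos_sq_add_sin_sq]
  rw [add_comm]
  exact hloc.hasDerivAt_eq_zero hHder

end Frames

/-! ### The interior estimate -/

section InteriorEstimate

variable {E : Type*} [NormedAddCommGroup E] [InnerProductSpace ℝ E]
  {R m M K₁ K₂ K : ℝ} {u f : E → ℝ} {x : E}

/-- A convex solution `u` of the prescribed curvature equation `det ∇²u = f (1 + |∇u|²)²` on the
ball of radius `R` in a Euclidean plane, together with the bounds that the interior estimate is
allowed to depend on. The equation is written in every orthonormal frame, so that frames can be
adapted to `u` at a point. -/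
structure IsControlledSolution (R m M K₁ K₂ K : ℝ) (u f : E → ℝ) : Prop where
  radius_pos : 0 < R
  lower_pos : 0 < m
  contDiffOn : ContDiffOn ℝ 4 u (ball 0 R)
  contDiffOn_rhs : ContDiffOn ℝ 2 f (ball 0 R)
  convexOn : ConvexOn ℝ (ball 0 R) u
  rhs_mem_Icc : ∀ x ∈ ball 0 R, f x ∈ Icc m M
  det_eq : ∀ b : OrthonormalBasis (Fin 2) ℝ E,
    EqOn (fun x => ∂[b 0] (∂[b 0] u) x * ∂[b 1] (∂[b 1] u) x - ∂[b 0] (∂[b 1] u) x ^ 2)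
      (fun x => f x * (1 + ∂[b 0] u x ^ 2 + ∂[b 1] u x ^ 2) ^ 2) (ball 0 R)
  norm_fderiv_rhs_le : ∀ x ∈ ball 0 R, ‖fderiv ℝ f x‖ ≤ K₁
  norm_iteratedFDeriv_rhs_le : ∀ x ∈ ball 0 R, ‖iteratedFDeriv ℝ 2 f x‖ ≤ K₂
  norm_fderiv_le : ∀ x ∈ ball 0 R, ‖fderiv ℝ u x‖ ≤ K

namespace IsControlledSolution

theorem gradient_bound_nonneg (hu : IsControlledSolution R m M K₁ K₂ K u f) : 0 ≤ K :=
  (norm_nonneg _).trans (hu.norm_fderiv_le 0 (mem_ball_self hu.radius_pos))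

theorem bounds_le_of_add_le {Λ : ℝ} (hu : IsControlledSolution R m M K₁ K₂ K u f)
    (hΛ : 1 + M + K₁ + K₂ + 2 * K + K ^ 2 ≤ Λ) :
    1 ≤ Λ ∧ m ≤ Λ ∧ M ≤ Λ ∧ K₁ ≤ Λ ∧ K₂ ≤ Λ ∧ 2 * K ≤ Λ ∧ 1 + K ^ 2 ≤ Λ := by
  have hzero : (0 : E) ∈ ball 0 R := mem_ball_self hu.radius_pos
  have hm := hu.lower_pos
  obtain ⟨hmf, hfM⟩ := hu.rhs_mem_Icc 0 hzero
  have hK₁ : 0 ≤ K₁ := (norm_nonneg _).trans (hu.norm_fderiv_rhs_le 0 hzero)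
  have hK₂ : 0 ≤ K₂ := (norm_nonneg _).trans (hu.norm_iteratedFDeriv_rhs_le 0 hzero)
  have hK := hu.gradient_bound_nonneg
  have hKsq := sq_nonneg K
  refine ⟨?_, ?_, ?_, ?_, ?_, ?_, ?_⟩ <;> linarith

theorem differentiableAt (hu : IsControlledSolution R m M K₁ K₂ K u f) (hx : x ∈ ball 0 R) :
    DifferentiableAt ℝ u x :=
  differentiableAt_of_contDiffOn isOpen_ball hu.contDiffOn (by norm_num) hx

theorem abs_dirDeriv_le (hu : IsControlledSolution R m M K₁ K₂ K u f) (hx : x ∈ ball 0 R) {v : E}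
    (hv : ‖v‖ = 1) : |∂[v] u x| ≤ K := by
  simpa [hv] using (_root_.abs_dirDeriv_le u x v).trans
    (mul_le_mul_of_nonneg_right (hu.norm_fderiv_le x hx) (norm_nonneg v))

theorem second_deriv_nonneg (hu : IsControlledSolution R m M K₁ K₂ K u f) (hx : x ∈ ball 0 R)
    (v : E) : 0 ≤ ∂[v] (∂[v] u) x :=
  dirDeriv_dirDeriv_nonneg_of_convexOn isOpen_ball (hu.contDiffOn.of_le (by norm_num))
    hu.convexOn hx v

theorem lower_le_second_deriv_mul (hu : IsControlledSolution R m M K₁ K₂ K u f)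
    (b : OrthonormalBasis (Fin 2) ℝ E) (hx : x ∈ ball 0 R) :
    m ≤ ∂[b 0] (∂[b 0] u) x * ∂[b 1] (∂[b 1] u) x := by
  have hm := (hu.rhs_mem_Icc x hx).1
  calc m ≤ f x * (1 + ∂[b 0] u x ^ 2 + ∂[b 1] u x ^ 2) ^ 2 :=
        hm.trans (le_mul_of_one_le_right (hu.lower_pos.le.trans hm) (one_le_pow₀ (by
          linarith [sq_nonneg (∂[b 0] u x), sq_nonneg (∂[b 1] u x)])))
    _ = ∂[b 0] (∂[b 0] u) x * ∂[b 1] (∂[b 1] u) x - ∂[b 0] (∂[b 1] u) x ^ 2 :=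
        (hu.det_eq b hx).symm
    _ ≤ ∂[b 0] (∂[b 0] u) x * ∂[b 1] (∂[b 1] u) x := sub_le_self _ (sq_nonneg _)

theorem second_deriv_pos_of_orthonormalBasis (hu : IsControlledSolution R m M K₁ K₂ K u f)
    (b : OrthonormalBasis (Fin 2) ℝ E) (hx : x ∈ ball 0 R) (i : Fin 2) :
    0 < ∂[b i] (∂[b i] u) x := by
  have hpos := hu.lower_pos.trans_le (hu.lower_le_second_deriv_mul b hx)
  refine (hu.second_deriv_nonneg hx _).lt_of_ne' fun hzero => ?_
  fin_cases i <;> simp_all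

variable {ε : ℝ} {b : OrthonormalBasis (Fin 2) ℝ E}

theorem mixed_deriv_eq_zero_of_isMaxOn (hu : IsControlledSolution R m M K₁ K₂ K u f)
    (hx : x ∈ ball 0 (R / 2)) (hxε : tangentExcess u 0 x < ε)
    (hmax : IsMaxOn (pogorelovFunction ε u) (closedBall 0 (R / 2) ×ˢ sphere 0 1) (x, b 0)) :
    ∂[b 0] (∂[b 1] u) x = 0 := by
  have hxR : x ∈ ball 0 R := ball_subset_ball (by linarith [hu.radius_pos]) hx
  have hu₂ : ContDiffOn ℝ 2 u (ball 0 R) := hu.contDiffOn.of_le (by norm_num)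
  have hsum := apply_add_apply_eq_zero_of_forall_apply_le (fderiv ℝ (fderiv ℝ u) x)
    (b.norm_eq_one 0) (b.norm_eq_one 1) (b.inner_eq_zero (by simp)) fun z hz => by
      simpa only [dirDeriv_dirDeriv_eq (hu₂.contDiffAt (isOpen_ball.mem_nhds hxR))] using
        dirDeriv_dirDeriv_le_of_isMaxOn (ball_subset_closedBall hx) hxε hmax hz
  simp only [← dirDeriv_dirDeriv_eq (hu₂.contDiffAt (isOpen_ball.mem_nhds hxR))] at hsum
  linarith [dirDeriv_comm isOpen_ball hu₂ (b 0) (b 1) hxR]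

theorem isLocalMax_of_isMaxOn_pogorelovFunction (hx : x ∈ ball 0 (R / 2))
    (hmax : IsMaxOn (pogorelovFunction ε u) (closedBall 0 (R / 2) ×ˢ sphere 0 1) (x, b 0)) :
    IsLocalMax (fun y => (ε - tangentExcess u 0 y) * ∂[b 0] (∂[b 0] u) y *
      Real.exp ((∂[b 0] u y ^ 2 + ∂[b 1] u y ^ 2) / 2)) x := by
  simp only [dirDeriv_sq_add_dirDeriv_sq]
  filter_upwards [isOpen_ball.mem_nhds hx] with y hy
  exact hmax (⟨ball_subset_closedBall hy, mem_sphere_zero_iff_norm.2 (b.norm_eq_one 0)⟩ :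
    (y, b 0) ∈ closedBall 0 (R / 2) ×ˢ sphere 0 1)

theorem abs_dirDeriv_le_of_add_le {Λ : ℝ} (hu : IsControlledSolution R m M K₁ K₂ K u f)
    (hΛ : 1 + M + K₁ + K₂ + 2 * K + K ^ 2 ≤ Λ) (hx : x ∈ ball 0 R) {v : E} (hv : ‖v‖ = 1) :
    |∂[v] f x| ≤ Λ ∧ |∂[v] u x| ≤ Λ ∧ |∂[v] (fun y => ε - tangentExcess u 0 y) x| ≤ Λ := by
  obtain ⟨-, -, -, hK₁Λ, -, hKΛ, -⟩ := hu.bounds_le_of_add_le hΛ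
  have hK := hu.gradient_bound_nonneg
  have hf₁ := _root_.abs_dirDeriv_le f x v
  rw [hv, mul_one] at hf₁
  have hux := hu.abs_dirDeriv_le hx hv
  have hu₀ := hu.abs_dirDeriv_le (mem_ball_self hu.radius_pos) hv
  rw [dirDeriv_const_sub_tangentExcess ε 0 v (hu.differentiableAt hx)]
  exact ⟨(hf₁.trans (hu.norm_fderiv_rhs_le x hx)).trans hK₁Λ, by linarith,
    (abs_sub _ _).trans (by linarith)⟩

theorem mul_second_deriv_le_of_isMaxOn {Λ : ℝ} (hu : IsControlledSolution R m M K₁ K₂ K u f)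
    (hΛ : 1 + M + K₁ + K₂ + 2 * K + K ^ 2 ≤ Λ) (hx : x ∈ ball 0 (R / 2))
    (hxε : tangentExcess u 0 x < ε)
    (hmax : IsMaxOn (pogorelovFunction ε u) (closedBall 0 (R / 2) ×ˢ sphere 0 1) (x, b 0)) :
    m * ((ε - tangentExcess u 0 x) * ∂[b 0] (∂[b 0] u) x) ≤
      13 * Λ ^ 4 * (ε - tangentExcess u 0 x) + 16 * Λ ^ 5 := by
  have hxR : x ∈ ball 0 R := ball_subset_ball (by linarith [hu.radius_pos]) hx
  have hη : 0 < ε - tangentExcess u 0 x := sub_pos.2 hxε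
  have hu₂ : ContDiffOn ℝ 2 u (ball 0 R) := hu.contDiffOn.of_le (by norm_num)
  obtain ⟨hΛ₁, hmΛ, hMΛ, -, hK₂Λ, -, hKsqΛ⟩ := hu.bounds_le_of_add_le hΛ
  obtain ⟨hmf, hfM⟩ := hu.rhs_mem_Icc x hxR
  rcases lt_or_ge (∂[b 0] (∂[b 0] u) x) 1 with hlt | hl
  · have hΛ₄ : Λ ≤ Λ ^ 4 := le_self_pow₀ hΛ₁ (by norm_num)
    calc m * ((ε - tangentExcess u 0 x) * ∂[b 0] (∂[b 0] u) x)
        ≤ Λ ^ 4 * ((ε - tangentExcess u 0 x) * 1) := by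
          gcongr
          · exact mul_nonneg hη.le (hu.second_deriv_nonneg hxR _)
          · exact hmΛ.trans hΛ₄
      _ ≤ 13 * Λ ^ 4 * (ε - tangentExcess u 0 x) + 16 * Λ ^ 5 := by
          nlinarith [mul_pos (pow_pos (zero_lt_one.trans_le hΛ₁) 4) hη,
            pow_pos (zero_lt_one.trans_le hΛ₁) 5]
  have hWΛ : 1 + ∂[b 0] u x ^ 2 + ∂[b 1] u x ^ 2 ≤ Λ := by
    rw [add_assoc, dirDeriv_sq_add_dirDeriv_sq]
    linarith [pow_le_pow_left₀ (norm_nonneg _) (hu.norm_fderiv_le x hxR) 2]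
  have hf₁₁ : |∂[b 0] (∂[b 0] f) x| ≤ Λ := by
    have := abs_dirDeriv_dirDeriv_le
      (hu.contDiffOn_rhs.contDiffAt (isOpen_ball.mem_nhds hxR)) (b 0) (b 0)
    simp only [b.norm_eq_one, mul_one] at this
    exact (this.trans (hu.norm_iteratedFDeriv_rhs_le x hxR)).trans hK₂Λ
  have hframe (i : Fin 2) := hu.abs_dirDeriv_le_of_add_le (ε := ε) hΛ hxR (b.norm_eq_one i)
  exact pogorelov_bound (e' := b 1) isOpen_ball hxR hu.contDiffOn
    (contDiffOn_const.sub (contDiffOn_tangentExcess hu₂ 0)) hu.contDiffOn_rhs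
    (dirDeriv_dirDeriv_const_sub_tangentExcess isOpen_ball hu₂ hxR ε 0 _)
    (dirDeriv_dirDeriv_const_sub_tangentExcess isOpen_ball hu₂ hxR ε 0 _) hη hl
    (hu.second_deriv_pos_of_orthonormalBasis b hxR 1) (hu.det_eq b)
    (hu.mixed_deriv_eq_zero_of_isMaxOn hx hxε hmax)
    (isLocalMax_of_isMaxOn_pogorelovFunction hx hmax) hu.lower_pos hmf hΛ₁ (hfM.trans hMΛ) hWΛ
    hf₁₁ (by simpa using ⟨hframe 0, hframe 1⟩)

variable [Fact (Module.finrank ℝ E = 2)]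

theorem second_deriv_pos (hu : IsControlledSolution R m M K₁ K₂ K u f) (hx : x ∈ ball 0 R) {v : E}
    (hv : ‖v‖ = 1) : 0 < ∂[v] (∂[v] u) x := by
  obtain ⟨b, rfl⟩ := exists_orthonormalBasis_apply_zero_eq hv
  exact hu.second_deriv_pos_of_orthonormalBasis b hx 0

theorem exists_forall_lt_tangentExcess (hR : 0 < R) (hm : 0 < m) (hK : 0 ≤ K) :
    ∃ ε > 0, ∀ (M K₁ K₂ : ℝ) (u f : E → ℝ), IsControlledSolution R m M K₁ K₂ K u f →
      ∀ y, ‖y‖ = R / 2 → ε < tangentExcess u 0 y := by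
  obtain ⟨ε, hε, H⟩ := exists_lt_apply_smul_of_convexOn (E := E) hR hm
    (by positivity : 0 ≤ 2 * K)
  refine ⟨ε, hε, fun M K₁ K₂ u f hu y hy => ?_⟩
  have hzero : (0 : E) ∈ ball 0 R := mem_ball_self hR
  have hu₂ : ContDiffOn ℝ 2 u (ball 0 R) := hu.contDiffOn.of_le (by norm_num)
  have hunit : ‖(R / 2)⁻¹ • y‖ = 1 := by
    rw [norm_smul, hy, norm_inv, Real.norm_of_nonneg (by positivity)]
    field_simp
  obtain ⟨b, hb⟩ := exists_orthonormalBasis_apply_zero_eq hunit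
  have hlt := H (tangentExcess u 0) (b 0) (b 1) (b.norm_eq_one 0) (b.norm_eq_one 1)
    (b.inner_eq_zero (by simp)) (contDiffOn_tangentExcess hu₂ 0)
    (convexOn_tangentExcess hu.convexOn 0)
    (fun x hx => tangentExcess_nonneg hu.convexOn hzero hx (hu.differentiableAt hzero))
    (tangentExcess_self u 0) (fun x hx => ?_) fun x hx => ?_
  · rwa [hb, smul_inv_smul₀ (by positivity)] at hlt
  · rw [dirDeriv_tangentExcess 0 (b 1) (hu.differentiableAt hx)]
    linarith [(abs_le.1 (hu.abs_dirDeriv_le hx (b.norm_eq_one 1))).2,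
      (abs_le.1 (hu.abs_dirDeriv_le hzero (b.norm_eq_one 1))).1]
  · rw [dirDeriv_dirDeriv_tangentExcess isOpen_ball hu₂ 0 _ _ hx,
      dirDeriv_dirDeriv_tangentExcess isOpen_ball hu₂ 0 _ _ hx]
    exact hu.lower_le_second_deriv_mul b hx

theorem exists_isMaxOn_pogorelovFunction (hu : IsControlledSolution R m M K₁ K₂ K u f)
    (hε : 0 < ε) (hbdry : ∀ y, ‖y‖ = R / 2 → ε < tangentExcess u 0 y) {v : E} (hv : ‖v‖ = 1) :
    ∃ x ∈ ball (0 : E) (R / 2), ∃ e : E, ‖e‖ = 1 ∧ tangentExcess u 0 x < ε ∧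
      IsMaxOn (pogorelovFunction ε u) (closedBall 0 (R / 2) ×ˢ sphere 0 1) (x, e) := by
  have : FiniteDimensional ℝ E := .of_fact_finrank_eq_two
  have : ProperSpace E := FiniteDimensional.proper_real E
  have hR := hu.radius_pos
  have hsub : closedBall (0 : E) (R / 2) ⊆ ball 0 R := closedBall_subset_ball (by linarith)
  have hcont := continuousOn_pogorelovFunction ε isOpen_ball (hu.contDiffOn.of_le (by norm_num))
  have hmem : ((0 : E), v) ∈ closedBall (0 : E) (R / 2) ×ˢ sphere (0 : E) 1 :=
    ⟨mem_closedBall_self (by positivity), by simpa using hv⟩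
  obtain ⟨⟨x, e⟩, ⟨hx, he⟩, hmax⟩ := ((isCompact_closedBall _ _).prod (isCompact_sphere _ _)
    ).exists_isMaxOn ⟨_, hmem⟩ (hcont.mono (prod_mono hsub (subset_univ _)))
  have hpos : 0 < pogorelovFunction ε u (0, v) := by
    have := hu.second_deriv_pos (mem_ball_self hR) hv
    simp only [pogorelovFunction, tangentExcess_self, sub_zero]
    positivity
  have hxε : tangentExcess u 0 x < ε := by
    by_contra! hle
    refine (hpos.trans_le (hmax hmem)).not_ge (mul_nonpos_of_nonpos_of_nonneg
      (mul_nonpos_of_nonpos_of_nonneg (sub_nonpos.2 hle) (hu.second_deriv_nonneg (hsub hx) e))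
      (Real.exp_nonneg _))
  refine ⟨x, mem_ball_zero_iff.2 ((mem_closedBall_zero_iff.1 hx).lt_of_ne fun hxR => ?_), e,
    mem_sphere_zero_iff_norm.1 he, hxε, hmax⟩
  exact hxε.not_gt (hbdry x hxR)

theorem second_deriv_zero_le {Λ : ℝ} (hu : IsControlledSolution R m M K₁ K₂ K u f)
    (hΛ : 1 + M + K₁ + K₂ + 2 * K + K ^ 2 ≤ Λ) (hε : 0 < ε)
    (hbdry : ∀ y, ‖y‖ = R / 2 → ε < tangentExcess u 0 y) {v : E} (hv : ‖v‖ = 1) :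
    ∂[v] (∂[v] u) 0 ≤ (13 * Λ ^ 4 * ε + 16 * Λ ^ 5) / m * Real.exp (K ^ 2 / 2) / ε := by
  obtain ⟨x, hx, e, he, hxε, hmax⟩ := hu.exists_isMaxOn_pogorelovFunction hε hbdry hv
  obtain ⟨b, rfl⟩ := exists_orthonormalBasis_apply_zero_eq he
  have hR := hu.radius_pos
  have hm := hu.lower_pos
  have hxR : x ∈ ball 0 R := ball_subset_ball (by linarith) hx
  have hexcess := tangentExcess_nonneg hu.convexOn (mem_ball_self hR) hxR
    (hu.differentiableAt (mem_ball_self hR))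
  have hbound := hu.mul_second_deriv_le_of_isMaxOn hΛ hx hxε hmax
  have hnonneg := hu.second_deriv_nonneg (mem_ball_self hR) v
  rw [le_div_iff₀ hε]
  calc ∂[v] (∂[v] u) 0 * ε ≤ ∂[v] (∂[v] u) 0 * ε * Real.exp (‖fderiv ℝ u 0‖ ^ 2 / 2) :=
        le_mul_of_one_le_right (by positivity) (Real.one_le_exp (by positivity))
    _ = pogorelovFunction ε u (0, v) := by
        simp only [pogorelovFunction, tangentExcess_self]
        ring
    _ ≤ pogorelovFunction ε u (x, b 0) :=
        hmax ⟨mem_closedBall_self (by positivity), mem_sphere_zero_iff_norm.2 hv⟩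
    _ ≤ (13 * Λ ^ 4 * ε + 16 * Λ ^ 5) / m * Real.exp (K ^ 2 / 2) := by
        have hprod : (ε - tangentExcess u 0 x) * ∂[b 0] (∂[b 0] u) x ≤
            (13 * Λ ^ 4 * ε + 16 * Λ ^ 5) / m := by
          rw [le_div_iff₀' hm]
          refine hbound.trans ?_
          gcongr
          linarith
        have := hu.norm_fderiv_le x hxR
        unfold pogorelovFunction
        gcongr
        exact (mul_nonneg (sub_pos.2 hxε).le (hu.second_deriv_nonneg hxR _)).trans hprod

variable (E) in
theorem exists_forall_norm_iteratedFDeriv_le (R m M K₁ K₂ K : ℝ) :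
    ∃ C, ∀ u f : E → ℝ, IsControlledSolution R m M K₁ K₂ K u f → ‖iteratedFDeriv ℝ 2 u 0‖ ≤ C := by
  by_cases! hpos : ∃ u f : E → ℝ, IsControlledSolution R m M K₁ K₂ K u f
  swap
  · exact ⟨0, fun u f hu => absurd hu (hpos u f)⟩
  obtain ⟨_, _, h₀⟩ := hpos
  obtain ⟨ε, hε, hbdry⟩ := exists_forall_lt_tangentExcess (E := E) h₀.radius_pos h₀.lower_pos
    h₀.gradient_bound_nonneg
  have : Nontrivial E :=
    Module.nontrivial_of_finrank_pos (R := ℝ) (by simp [Fact.out (p := Module.finrank ℝ E = 2)])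
  obtain ⟨w, hw⟩ := exists_norm_eq E zero_le_one
  let Λ := 1 + M + K₁ + K₂ + 2 * K + K ^ 2
  refine ⟨(13 * Λ ^ 4 * ε + 16 * Λ ^ 5) / m * Real.exp (K ^ 2 / 2) / ε, fun u f hu => ?_⟩
  have hzero := mem_ball_self (x := (0 : E)) hu.radius_pos
  have hsecond {v : E} (hv : ‖v‖ = 1) :=
    hu.second_deriv_zero_le le_rfl hε (hbdry M K₁ K₂ u f hu) hv
  exact norm_iteratedFDeriv_two_le
    ((hu.contDiffOn.of_le (by norm_num)).contDiffAt (isOpen_ball.mem_nhds hzero))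
    ((hu.second_deriv_nonneg hzero w).trans (hsecond hw)) (hu.second_deriv_nonneg hzero)
    fun v hv => hsecond hv

end IsControlledSolution

end InteriorEstimate

theorem isControlledSolution_of_forall_pd_eq {R m M K₁ K₂ K : ℝ}
    {u f : EuclideanSpace ℝ (Fin 2) → ℝ} (hR : 0 < R) (hm : 0 < m)
    (hu : ContDiffOn ℝ 4 u (ball 0 R)) (hf : ContDiffOn ℝ 2 f (ball 0 R))
    (hconv : ConvexOn ℝ (ball 0 R) u) (hfI : ∀ x ∈ ball 0 R, m ≤ f x ∧ f x ≤ M)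
    (hpd : ∀ x ∈ ball (0 : EuclideanSpace ℝ (Fin 2)) R,
      pd 0 (pd 0 u) x * pd 1 (pd 1 u) x - pd 0 (pd 1 u) x * pd 1 (pd 0 u) x =
        f x * (1 + ∑ k, pd k u x ^ 2) ^ 2)
    (hf₁ : ∀ x ∈ ball 0 R, ‖fderiv ℝ f x‖ ≤ K₁)
    (hf₂ : ∀ x ∈ ball 0 R, ‖iteratedFDeriv ℝ 2 f x‖ ≤ K₂)
    (hu₁ : ∀ x ∈ ball 0 R, ‖fderiv ℝ u x‖ ≤ K) : IsControlledSolution R m M K₁ K₂ K u f := by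
  refine ⟨hR, hm, hu, hf, hconv, hfI, fun b x hx => ?_, hf₁, hf₂, hu₁⟩
  have hu₂ : ContDiffOn ℝ 2 u (ball 0 R) := hu.of_le (by norm_num)
  let b₀ := EuclideanSpace.basisFun (Fin 2) ℝ
  have pd_eq (i : Fin 2) : pd i = dirDeriv (b₀ i) := by
    ext g y
    simp only [pd, dirDeriv, b₀, EuclideanSpace.basisFun_apply]
  have heq := hpd x hx
  simp only [pd_eq, Fin.sum_univ_two, dirDeriv_sq_add_dirDeriv_sq] at heq
  rw [dirDeriv_det_eq_of_orthonormalBasis (hu₂.contDiffAt (isOpen_ball.mem_nhds hx)) b₀ b,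
    dirDeriv_comm isOpen_ball hu₂ (b 1) (b 0) hx, ← sq] at heq
  simpa only [add_assoc, dirDeriv_sq_add_dirDeriv_sq] using heq

/-- Interior C² estimate for the prescribed Gauss curvature equation in dimension two:
there is a constant C, depending only on m, M, R, sup|∇f|, sup|∇²f| and sup|∇u|, such
that any C⁴ convex solution u of det ∇²u/(1+|∇u|²)² = f on B_R(0) with 0 < m ≤ f ≤ M
satisfies |∇²u(0)| ≤ C. -/
theorem stmt19 :
    ∃ C : ℝ → ℝ → ℝ → ℝ → ℝ → ℝ → ℝ,
      ∀ (R m M K₁ K₂ K₃ : ℝ) (u f : EuclideanSpace ℝ (Fin 2) → ℝ),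
        0 < R → 0 < m →
        ContDiffOn ℝ 4 u (ball (0 : EuclideanSpace ℝ (Fin 2)) R) →
        ContDiffOn ℝ 2 f (ball (0 : EuclideanSpace ℝ (Fin 2)) R) →
        ConvexOn ℝ (ball (0 : EuclideanSpace ℝ (Fin 2)) R) u →
        (∀ x ∈ ball (0 : EuclideanSpace ℝ (Fin 2)) R, m ≤ f x ∧ f x ≤ M) →
        (∀ x ∈ ball (0 : EuclideanSpace ℝ (Fin 2)) R,
          pd 0 (pd 0 u) x * pd 1 (pd 1 u) x - pd 0 (pd 1 u) x * pd 1 (pd 0 u) x =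
            f x * (1 + ∑ k, (pd k u x) ^ 2) ^ 2) →
        (∀ x ∈ ball (0 : EuclideanSpace ℝ (Fin 2)) R, ‖fderiv ℝ f x‖ ≤ K₁) →
        (∀ x ∈ ball (0 : EuclideanSpace ℝ (Fin 2)) R, ‖iteratedFDeriv ℝ 2 f x‖ ≤ K₂) →
        (∀ x ∈ ball (0 : EuclideanSpace ℝ (Fin 2)) R, ‖fderiv ℝ u x‖ ≤ K₃) →
        ‖iteratedFDeriv ℝ 2 u 0‖ ≤ C m M R K₁ K₂ K₃ := by
  have : Fact (Module.finrank ℝ (EuclideanSpace ℝ (Fin 2)) = 2) := ⟨finrank_euclideanSpace_fin⟩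
  choose C hC using IsControlledSolution.exists_forall_norm_iteratedFDeriv_le
    (EuclideanSpace ℝ (Fin 2))
  refine ⟨fun m M R K₁ K₂ K₃ => C R m M K₁ K₂ K₃, ?_⟩
  intro R m M K₁ K₂ K₃ u f hR hm hu hf hconv hfI hpd hf₁ hf₂ hu₁
  exact hC R m M K₁ K₂ K₃ u f
    (isControlledSolution_of_forall_pd_eq hR hm hu hf hconv hfI hpd hf₁ hf₂ hu₁)
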